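/- arXiv:1709.08869 — 4 statements merged into one kernel-verified Lean document; each statement's English description precedes it below -/
import Mathlib

section
/- For an element V of the lattice MON of monoid varieties, the following are equivalent: (i) V is a modular, lower-modular and upper-modular element of MON; (ii) V is a neutral element of MON; (iii) V is one of the three elements ⊥ (the trivial variety T), SL = ⟪{(x²,x),(xy,yx)}⟫ (the variety of semilattice monoids), or ⊤ (the variety of all monoids). -/
/-!
The lattice `MON` is dual to the lattice of fully invariant congruences, so everything is phrased
for the equational theory `θ` of the variety. Meets of theories are intersections; an identity is
excluded from a join by exhibiting a set of words that is a union of classes of both theories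
(`Sat.sup`), which for a theory given by generators is checked on single rewriting steps (`Sat.gn`).

A neutral element is modular, lower-modular and upper-modular in any lattice (`neutral_imp`), and
`⊥`, `⊤` are neutral in any bounded lattice. The theory `sig` of semilattices consists of the
identities between words of equal content. A theory not contained in `sig` contains `x^n ≈ 1` for
some `n ≥ 1`, so words can be padded by `n`-th powers until contents agree; this yields neutrality
of `SL` (`sig_neutral`).

Conversely, let `V ≠ ⊤` be modular, lower-modular and upper-modular, with theory `θ`.
* Lower-modularity gives an identity that is not balanced (`exists_unbalanced`): the rearrangements
  of the shortest nontrivial identity can be separated by a finite group. Hence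
  `x^m ≈ x^(m+n)` for some `m, n ≥ 1`.
* Modularity then gives `x^m y^m ≈ y^m x^m` (`pow_comm_of_modular`).
* If no identity `x ≈ x^k` with `k ≠ 1` holds, upper-modularity makes `V` commutative
  (`comm_of_upper`), which contradicts lower-modularity (`false_of_lower`).
* So `x ≈ x^(1+n)` for some `n ≥ 1`, and the second step with `m = 1` shows that `V` is commutative.
* Modularity, tested against the square-free words `s` and `t`, gives `x² ≈ x`
  (`idem_of_modular`). Thus `sig ≤ θ`, so `V` is `SL` or `⊥`.
-/

/-- The free monoid over a countably infinite alphabet. -/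
abbrev F : Type := FreeMonoid ℕ

/-- A congruence on the free monoid is fully invariant if it is stable
under every monoid endomorphism. -/
def IsFullyInvariant (c : Con F) : Prop :=
  ∀ f : F →* F, ∀ u v : F, c u v → c (f u) (f v)

/-- The type of fully invariant congruences on `F`. -/
abbrev FICon : Type := {c : Con F // IsFullyInvariant c}

/-- The smallest fully invariant congruence containing a set of pairs of words. -/
def fiGen (S : Set (F × F)) : Con F :=
  sInf {c : Con F | IsFullyInvariant c ∧ ∀ p ∈ S, c p.1 p.2}

lemma fiGen_apply (S : Set (F × F)) (u v : F) :
    fiGen S u v ↔ ∀ c : Con F, (IsFullyInvariant c ∧ ∀ p ∈ S, c p.1 p.2) → c u v :=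
  ⟨fun h c hc => h c hc, fun h c hc => h c hc⟩

lemma isFullyInvariant_fiGen (S : Set (F × F)) : IsFullyInvariant (fiGen S) := by
  intro f u v h
  rw [fiGen_apply] at h ⊢
  exact fun c hc => hc.1 f u v (h c hc)

/-- The fully invariant closure of a congruence, as an element of `FICon`. -/
def fiCl (c : Con F) : FICon :=
  ⟨fiGen {p | c p.1 p.2}, isFullyInvariant_fiGen _⟩

lemma le_fiCl (c : Con F) : c ≤ (fiCl c).val := by
  refine le_sInf fun b hb => ?_
  rw [Con.le_def]
  exact fun {u v} huv => hb.2 (u, v) huv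

lemma fiGC : GaloisConnection fiCl (Subtype.val : FICon → Con F) := by
  intro c d
  constructor
  · exact fun h => le_trans (le_fiCl c) h
  · intro h
    have hle : (fiCl c).val ≤ d.val :=
      sInf_le ⟨d.2, fun p hp => (Con.le_def.mp h) hp⟩
    exact hle

/-- The Galois insertion between congruences and fully invariant congruences. -/
def fiGI : GaloisInsertion fiCl (Subtype.val : FICon → Con F) :=
  fiGC.toGaloisInsertion fun d => le_fiCl d.val

noncomputable instance : CompleteLattice FICon := fiGI.liftCompleteLattice

/-- The lattice of monoid varieties: the order dual of the lattice of fully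
invariant congruences on the free monoid `F`. -/
abbrev MON : Type := FIConᵒᵈ

/-- The monoid variety given by the identity system `S`. -/
def gen (S : Set (F × F)) : MON :=
  OrderDual.toDual ⟨fiGen S, isFullyInvariant_fiGen S⟩

/-- The fully invariant congruence (equational theory) of a monoid variety. -/
def theta (V : MON) : Con F := (OrderDual.ofDual V).val

/-- Fixed pairwise distinct letters. -/
def x : F := FreeMonoid.of 0
def y : F := FreeMonoid.of 1
def z : F := FreeMonoid.of 2
def r : F := FreeMonoid.of 3

/-- The content of a word: the set of letters occurring in it. -/
def con (w : F) : Set ℕ := {a | a ∈ FreeMonoid.toList w}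

/-- The set of letters that are simple in a word (occur exactly once). -/
def simpleIn (w : F) : Set ℕ := {a | (FreeMonoid.toList w).count a = 1}

/-- Neutral element of a lattice. -/
def IsNeutralElt {L : Type*} [Lattice L] (a : L) : Prop :=
  ∀ y z : L, (a ⊔ y) ⊓ (y ⊔ z) ⊓ (z ⊔ a) = (a ⊓ y) ⊔ (y ⊓ z) ⊔ (z ⊓ a)

/-- Costandard element of a lattice. -/
def IsCostandardElt {L : Type*} [Lattice L] (a : L) : Prop :=
  ∀ y z : L, (a ⊓ y) ⊔ z = (a ⊔ z) ⊓ (y ⊔ z)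

/-- Codistributive element of a lattice. -/
def IsCodistributiveElt {L : Type*} [Lattice L] (a : L) : Prop :=
  ∀ y z : L, a ⊓ (y ⊔ z) = (a ⊓ y) ⊔ (a ⊓ z)

/-- Modular element of a lattice. -/
def IsModularElt {L : Type*} [Lattice L] (a : L) : Prop :=
  ∀ y z : L, y ≤ z → (a ⊔ y) ⊓ z = (a ⊓ z) ⊔ y

/-- Upper-modular element of a lattice. -/
def IsUpperModularElt {L : Type*} [Lattice L] (a : L) : Prop :=
  ∀ y z : L, y ≤ a → a ⊓ (y ⊔ z) = y ⊔ (a ⊓ z)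

/-- Lower-modular element of a lattice. -/
def IsLowerModularElt {L : Type*} [Lattice L] (a : L) : Prop :=
  ∀ y z : L, a ≤ y → a ⊔ (y ⊓ z) = y ⊓ (a ⊔ z)

/-- The variety `SL` of semilattice monoids. -/
def SLv : MON := gen {(x*x, x), (x*y, y*x)}

/-- The variety `C₂`. -/
def C2v : MON := gen {(x*x, x*x*x), (x*y, y*x)}

/-- The variety `Cₙ`. -/
def Cv (n : ℕ) : MON := gen {(x^n, x^(n+1)), (x*y, y*x)}

/-- The variety `Aₙ` of Abelian groups of exponent dividing `n`. -/
def Av (n : ℕ) : MON := gen {(x^n, 1), (x*y, y*x)}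

/-- The variety `D`. -/
def Dv : MON := gen {(x*x, x*x*x), (x*x*y, x*y*x), (x*y*x, y*x*x)}

/-- The variety `B₂,₃`. -/
def Bv : MON := gen {(x*x, x*x*x)}

/-- The word `s = yxyzxz`. -/
def s : F := y*x*y*z*x*z

/-- The word `t = yxzxyxz`. -/
def t : F := y*x*z*x*y*x*z

/-- The variety `Q`. -/
def Qv : MON := gen {(s, t)}

/-- The variety `F` (denoted `Fv` to avoid a clash with the free monoid). -/
def Fv : MON :=
  gen {(x*y*x, x*y*x*x), (x*x*y*y, y*y*x*x), (x*x*y, x*x*y*x), (x*y*r*x*y, y*x*r*x*y)}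

/-! ### Fully invariant congruences and saturated sets -/

/-- The fully invariant congruence generated by a set of pairs, as an element of `FICon`. -/
def gn (S : Set (F × F)) : FICon := ⟨fiGen S, isFullyInvariant_fiGen S⟩

lemma le_iff_rel {α β : FICon} : α ≤ β ↔ ∀ u v, α.1 u v → β.1 u v :=
  ⟨fun h _ _ huv => h huv, fun h _ _ huv => h _ _ huv⟩

lemma inf_rel {α β : FICon} {u v : F} : (α ⊓ β).1 u v ↔ α.1 u v ∧ β.1 u v := by
  constructor
  · exact fun h => ⟨le_iff_rel.1 inf_le_left _ _ h, le_iff_rel.1 inf_le_right _ _ h⟩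
  · intro h
    let δ : FICon := ⟨α.1 ⊓ β.1, fun f a b hab => ⟨α.2 f a b hab.1, β.2 f a b hab.2⟩⟩
    have hδ : δ ≤ α ⊓ β :=
      le_inf (le_iff_rel.2 fun _ _ hab => hab.1) (le_iff_rel.2 fun _ _ hab => hab.2)
    exact le_iff_rel.1 hδ u v h

lemma sup_rel_left {α : FICon} (β : FICon) {u v : F} (h : α.1 u v) : (α ⊔ β).1 u v :=
  le_iff_rel.1 le_sup_left _ _ h

lemma sup_rel_right (α : FICon) {β : FICon} {u v : F} (h : β.1 u v) : (α ⊔ β).1 u v :=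
  le_iff_rel.1 le_sup_right _ _ h

lemma gn_rel {S : Set (F × F)} {u v : F} (h : (u, v) ∈ S) : (gn S).1 u v :=
  (fiGen_apply S u v).2 fun _ hc => hc.2 _ h

lemma gn_le {S : Set (F × F)} {α : FICon} (h : ∀ u v, (u, v) ∈ S → α.1 u v) : gn S ≤ α :=
  le_iff_rel.2 fun u v huv => (fiGen_apply S u v).1 huv α.1 ⟨α.2, fun p hp => h p.1 p.2 hp⟩

/-- The largest fully invariant congruence for which `P` is a union of classes. -/
def syn (P : Set F) : FICon :=
  ⟨{ r := fun u v => ∀ (f : F →* F) (c d : F), c * f u * d ∈ P ↔ c * f v * d ∈ P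
     iseqv := ⟨fun _ _ _ _ => Iff.rfl, fun h f c d => (h f c d).symm,
       fun h h' f c d => (h f c d).trans (h' f c d)⟩
     mul' := by
      intro a b a' b' h h' f c d
      have h1 := h f c (f a' * d)
      have h2 := h' f (c * f b) d
      simp only [map_mul, mul_assoc] at h1 h2 ⊢
      exact h1.trans h2 },
   fun g _ _ h f c d => h (f.comp g) c d⟩

/-- `P` is saturated by `α`: it is a union of `α`-classes. -/
def Sat (α : FICon) (P : Set F) : Prop := ∀ u v, α.1 u v → u ∈ P → v ∈ P

lemma Sat.le_syn {α : FICon} {P : Set F} (h : Sat α P) : α ≤ syn P := by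
  refine le_iff_rel.2 fun u v huv f c d => ?_
  have h1 : α.1 (c * f u * d) (c * f v * d) :=
    α.1.mul (α.1.mul (α.1.refl c) (α.2 f u v huv)) (α.1.refl d)
  exact ⟨h _ _ h1, h _ _ (α.1.symm h1)⟩

lemma Sat.of_le_syn {α : FICon} {P : Set F} (h : α ≤ syn P) : Sat α P := by
  intro u v huv hu
  have := le_iff_rel.1 h u v huv (MonoidHom.id F) 1 1
  simpa using this.1 (by simpa using hu)

/-- Saturation passes to joins; this is how elements of a join are excluded. -/
lemma Sat.sup {α β : FICon} {P : Set F} (h : Sat α P) (h' : Sat β P) : Sat (α ⊔ β) P :=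
  Sat.of_le_syn (sup_le h.le_syn h'.le_syn)

/-- For a generated congruence, saturation only has to be tested on one-step rewritings. -/
lemma Sat.gn {S : Set (F × F)} {P : Set F}
    (h : ∀ u v, (u, v) ∈ S → ∀ (f : F →* F) (c d : F), c * f u * d ∈ P ↔ c * f v * d ∈ P) :
    Sat (gn S) P :=
  Sat.of_le_syn (gn_le h)

/-! ### Special elements in terms of identities -/

lemma modular_rel {V : MON} (h : IsModularElt V) {β γ : FICon} (hβ : β ≤ γ) {u v : F}
    (hγ : γ.1 u v) (hs : (OrderDual.ofDual V ⊔ β).1 u v) :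
    ((OrderDual.ofDual V ⊓ γ) ⊔ β).1 u v := by
  have e : (OrderDual.ofDual V ⊓ γ) ⊔ β = (OrderDual.ofDual V ⊔ β) ⊓ γ :=
    h (OrderDual.toDual γ) (OrderDual.toDual β) hβ
  rw [e]
  exact inf_rel.2 ⟨hs, hγ⟩

lemma lower_rel {V : MON} (h : IsLowerModularElt V) {β γ : FICon} (hβ : β ≤ OrderDual.ofDual V)
    {u v : F} (hV : (OrderDual.ofDual V).1 u v) (hs : (β ⊔ γ).1 u v) :
    (β ⊔ (OrderDual.ofDual V ⊓ γ)).1 u v := by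
  have e : OrderDual.ofDual V ⊓ (β ⊔ γ) = β ⊔ (OrderDual.ofDual V ⊓ γ) :=
    h (OrderDual.toDual β) (OrderDual.toDual γ) hβ
  rw [← e]
  exact inf_rel.2 ⟨hV, hs⟩

lemma upper_rel {V : MON} (h : IsUpperModularElt V) {β γ : FICon} (hβ : OrderDual.ofDual V ≤ β)
    {u v : F} (hb : β.1 u v) (hs : (OrderDual.ofDual V ⊔ γ).1 u v) :
    (OrderDual.ofDual V ⊔ (β ⊓ γ)).1 u v := by
  have e : OrderDual.ofDual V ⊔ (β ⊓ γ) = β ⊓ (OrderDual.ofDual V ⊔ γ) :=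
    h (OrderDual.toDual β) (OrderDual.toDual γ) hβ
  rw [e]
  exact inf_rel.2 ⟨hb, hs⟩

lemma neutral_imp {L : Type*} [Lattice L] {a : L} (h : IsNeutralElt a) :
    IsModularElt a ∧ IsLowerModularElt a ∧ IsUpperModularElt a := by
  refine ⟨fun b c hbc => ?_, fun b c hb => ?_, fun b c hb => ?_⟩
  · have e := h b c
    apply le_antisymm
    · calc (a ⊔ b) ⊓ c ≤ (a ⊔ b) ⊓ (b ⊔ c) ⊓ (c ⊔ a) :=
          le_inf (le_inf inf_le_left (inf_le_right.trans le_sup_right))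
            (inf_le_right.trans le_sup_left)
        _ = _ := e
        _ ≤ (a ⊓ c) ⊔ b := sup_le (sup_le (inf_le_right.trans le_sup_right)
            (inf_le_left.trans le_sup_right)) (by rw [inf_comm]; exact le_sup_left)
    · exact sup_le (le_inf (inf_le_left.trans le_sup_left) inf_le_right)
        (le_inf le_sup_right hbc)
  · have e := h b c
    rw [sup_eq_right.2 hb, inf_eq_left.2 hb] at e
    apply le_antisymm
    · exact sup_le (le_inf hb le_sup_left) (le_inf inf_le_left (inf_le_right.trans le_sup_right))
    · calc b ⊓ (a ⊔ c) ≤ b ⊓ (b ⊔ c) ⊓ (c ⊔ a) :=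
          le_inf (le_inf inf_le_left (inf_le_left.trans le_sup_left))
            (by rw [sup_comm c a]; exact inf_le_right)
        _ = _ := e
        _ ≤ a ⊔ (b ⊓ c) := sup_le le_rfl (inf_le_right.trans le_sup_left)
  · have e := h b c
    rw [sup_eq_left.2 hb, inf_eq_right.2 hb] at e
    apply le_antisymm
    · calc a ⊓ (b ⊔ c) ≤ a ⊓ (b ⊔ c) ⊓ (c ⊔ a) := le_inf le_rfl (inf_le_left.trans le_sup_right)
        _ = _ := e
        _ ≤ b ⊔ (a ⊓ c) := sup_le (sup_le le_sup_left (inf_le_left.trans le_sup_left))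
            (by rw [inf_comm]; exact le_sup_right)
    · exact sup_le (le_inf hb le_sup_left) (le_inf inf_le_left (inf_le_right.trans le_sup_right))

/-! ### Neutrality of the variety of semilattices -/

lemma con_one : con 1 = ∅ := by
  ext a; simp [con]

lemma con_of (a : ℕ) : con (FreeMonoid.of a) = {a} := by
  ext b; simp [con]

lemma con_mul (u v : F) : con (u * v) = con u ∪ con v := by
  ext a; simp [con]

lemma con_pow (u : F) {n : ℕ} (hn : 1 ≤ n) : con (u ^ n) = con u := by
  induction n, hn using Nat.le_induction with
  | base => simp
  | succ k _ ih => rw [pow_succ, con_mul, ih, Set.union_self]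

lemma mem_con_hom (f : F →* F) (u : F) (a : ℕ) :
    a ∈ con (f u) ↔ ∃ b ∈ con u, a ∈ con (f (FreeMonoid.of b)) := by
  induction u using FreeMonoid.inductionOn' with
  | one => simp [con_one]
  | of_mul c w ih => simp [con_mul, con_of, ih]

lemma con_hom_mono (f : F →* F) {u v : F} (h : con u ⊆ con v) : con (f u) ⊆ con (f v) := by
  intro a ha
  obtain ⟨b, hb, hab⟩ := (mem_con_hom f u a).1 ha
  exact (mem_con_hom f v a).2 ⟨b, h hb, hab⟩

/-- The theory of semilattice monoids: `u` and `v` are related iff they have the same content. -/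
def sig : FICon :=
  ⟨{ r := fun u v => con u = con v
     iseqv := ⟨fun _ => rfl, fun h => h.symm, fun h h' => h.trans h'⟩
     mul' := fun h h' => by rw [con_mul, con_mul, h, h'] },
   fun f _ _ h => (con_hom_mono f (le_of_eq h)).antisymm (con_hom_mono f (le_of_eq h.symm))⟩

lemma sig_rel {u v : F} : sig.1 u v ↔ con u = con v := Iff.rfl

/-- The endomorphism that substitutes `w` for every letter. -/
def constHom (w : F) : F →* F := FreeMonoid.lift fun _ => w

/-- The endomorphism sending the letter `a` to `x` and deleting all other letters. -/
def proj (a : ℕ) : F →* F := FreeMonoid.lift fun i => if i = a then x else 1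

lemma proj_apply (a : ℕ) (u : F) : proj a u = x ^ (FreeMonoid.toList u).count a := by
  induction u using FreeMonoid.inductionOn' with
  | one => simp
  | of_mul c w ih =>
    rw [map_mul, ih, FreeMonoid.toList_of_mul, List.count_cons, proj, FreeMonoid.lift_eval_of]
    by_cases h : c = a
    · simp [h, pow_succ']
    · simp [h]

/-- An identity entails the identities in one letter obtained by deleting all other letters. -/
lemma rel_count (α : FICon) {u v : F} (h : α.1 u v) (a : ℕ) :
    α.1 (x ^ (FreeMonoid.toList u).count a) (x ^ (FreeMonoid.toList v).count a) := by
  have := α.2 (proj a) u v h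
  rwa [proj_apply, proj_apply] at this

lemma rel_x_pow (α : FICon) {i j : ℕ} (h : α.1 (x ^ i) (x ^ j)) (w : F) : α.1 (w ^ i) (w ^ j) := by
  have := α.2 (constHom w) _ _ h
  simpa [constHom, x] using this

/-- A theory with an identity violated by semilattices is a theory of groups of finite exponent. -/
lemma exists_pow_rel_one {α : FICon} (h : ¬ α ≤ sig) :
    ∃ n, 1 ≤ n ∧ ∀ w : F, α.1 (w ^ n) 1 := by
  have key : ∀ u v, α.1 u v → ∀ a ∈ con u, a ∉ con v → ∃ n, 1 ≤ n ∧ ∀ w : F, α.1 (w ^ n) 1 := by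
    intro u v huv a ha hv
    refine ⟨(FreeMonoid.toList u).count a, List.count_pos_iff.2 ha, fun w => ?_⟩
    have h1 := rel_count α huv a
    rw [List.count_eq_zero_of_not_mem (l := FreeMonoid.toList v) hv] at h1
    simpa using rel_x_pow α h1 w
  rw [le_iff_rel] at h
  push Not at h
  obtain ⟨u, v, huv, hne⟩ := h
  by_cases h1 : con u ⊆ con v
  · have h2 : ¬ con v ⊆ con u := fun h2 => hne (sig_rel.2 (h1.antisymm h2))
    obtain ⟨a, ha, hv⟩ := Set.not_subset.1 h2
    exact key v u (α.1.symm huv) a ha hv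
  · obtain ⟨a, ha, hv⟩ := Set.not_subset.1 h1
    exact key u v huv a ha hv

/-- Multiplying by a suitable power pads an identity of groups to one with equal contents. -/
lemma group_le {η ζ : FICon} (hη : ¬ η ≤ sig) (hζ : ¬ ζ ≤ sig) : η ≤ (sig ⊓ η) ⊔ (η ⊓ ζ) := by
  obtain ⟨n, hn, hn'⟩ := exists_pow_rel_one hη
  obtain ⟨m, hm, hm'⟩ := exists_pow_rel_one hζ
  have hk : ∀ w : F, ((sig ⊓ η) ⊔ (η ⊓ ζ)).1 (w ^ (n * m)) 1 := by
    refine fun w => sup_rel_right _ (inf_rel.2 ⟨?_, ?_⟩)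
    · rw [pow_mul']; exact hn' _
    · rw [pow_mul]; exact hm' _
  refine le_iff_rel.2 fun u v huv => ?_
  set δ := (sig ⊓ η) ⊔ (η ⊓ ζ) with hδ
  have pad : ∀ t : F, δ.1 t (t * (u * v) ^ (n * m)) := fun t => by
    simpa using δ.1.mul (δ.1.refl t) (δ.1.symm (hk (u * v)))
  refine δ.1.trans (pad u) (δ.1.trans ?_ (δ.1.symm (pad v)))
  refine sup_rel_left _ (inf_rel.2 ⟨?_, η.1.mul huv (η.1.refl _)⟩)
  rw [sig_rel, con_mul, con_mul, con_pow _ (Nat.mul_pos hn hm), con_mul]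
  ext a; simp only [Set.mem_union]; tauto

/-- The modular law for `sig`, with one theory of groups `ζ`. The auxiliary congruence `ρ` relates
`u` and `v` when they become `δ`-equal after multiplication by `w ^ n` for all `w` of large enough
content. -/
lemma sig_inf_sup_le {η ζ : FICon} (hζ : ¬ ζ ≤ sig) :
    sig ⊓ (η ⊔ ζ) ≤ η ⊔ (ζ ⊓ sig) := by
  obtain ⟨n, hn, hn'⟩ := exists_pow_rel_one hζ
  set δ := η ⊔ (ζ ⊓ sig) with hδ
  have ins : ∀ p q w : F, con w ⊆ con (p * q) → δ.1 (p * q) (p * w ^ n * q) := by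
    intro p q w hw
    refine sup_rel_right _ (inf_rel.2 ⟨?_, ?_⟩)
    · have := ζ.1.mul (ζ.1.mul (ζ.1.refl p) (ζ.1.symm (hn' w))) (ζ.1.refl q)
      simpa using this
    · rw [sig_rel]
      rw [con_mul] at hw
      rw [con_mul, con_mul, con_mul, con_pow w hn]
      ext a
      have := @hw a
      simp only [Set.mem_union] at this ⊢
      tauto
  let ρ : FICon := ⟨{
    r := fun u v => ∃ w₀ : F, ∀ w, con w₀ ⊆ con w → δ.1 (u * w ^ n) (v * w ^ n)
    iseqv := by
      refine ⟨fun u => ⟨1, fun w _ => δ.1.refl _⟩, ?_, ?_⟩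
      · rintro u v ⟨w₀, h⟩
        exact ⟨w₀, fun w hw => δ.1.symm (h w hw)⟩
      · rintro a b c ⟨w₀, h⟩ ⟨w₁, h'⟩
        refine ⟨w₀ * w₁, fun w hw => ?_⟩
        rw [con_mul] at hw
        exact δ.1.trans (h w (Set.subset_union_left.trans hw))
          (h' w (Set.subset_union_right.trans hw))
    mul' := by
      rintro a b a' b' ⟨w₀, h⟩ ⟨w₁, h'⟩
      refine ⟨w₀ * w₁, fun w hw => ?_⟩
      rw [con_mul] at hw
      have h1 := h w (Set.subset_union_left.trans hw)
      have h2 := h' w (Set.subset_union_right.trans hw)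
      have hsub : ∀ p : F, con w ⊆ con (p * (b' * w ^ n)) := fun p => by
        rw [con_mul, con_mul, con_pow w hn]
        exact Set.subset_union_right.trans Set.subset_union_right
      have e1 := ins a (b' * w ^ n) w (hsub a)
      have e2 := ins b (b' * w ^ n) w (hsub b)
      rw [mul_assoc, mul_assoc b]
      refine δ.1.trans (δ.1.mul (δ.1.refl a) h2) (δ.1.trans e1 (δ.1.trans ?_ (δ.1.symm e2)))
      exact δ.1.mul h1 (δ.1.refl _) }, by
    rintro f u v ⟨w₀, h⟩
    refine ⟨f w₀, fun w hw => ?_⟩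
    have h1 := δ.1.mul (δ.2 f _ _ (h w₀ subset_rfl)) (δ.1.refl (w ^ n))
    rw [map_mul f, map_mul f, map_pow f] at h1
    have hsub : ∀ p : F, con (f w₀) ⊆ con (p * w ^ n) := fun p => by
      rw [con_mul, con_pow w hn]
      exact hw.trans Set.subset_union_right
    exact δ.1.trans (ins _ _ _ (hsub _)) (δ.1.trans h1 (δ.1.symm (ins _ _ _ (hsub _))))⟩
  have hρ : η ⊔ ζ ≤ ρ := by
    refine sup_le (le_iff_rel.2 fun u v huv => ?_) (le_iff_rel.2 fun u v huv => ?_)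
    · exact ⟨1, fun w _ => δ.1.mul (sup_rel_left _ huv) (δ.1.refl _)⟩
    · refine ⟨u * v, fun w hw => sup_rel_right _ (inf_rel.2 ⟨ζ.1.mul huv (ζ.1.refl _), ?_⟩)⟩
      rw [con_mul] at hw
      rw [sig_rel, con_mul, con_mul, con_pow w hn,
        Set.union_eq_right.2 (Set.subset_union_left.trans hw),
        Set.union_eq_right.2 (Set.subset_union_right.trans hw)]
  refine le_iff_rel.2 fun u v huv => ?_
  obtain ⟨hs, huv⟩ := inf_rel.1 huv
  rw [sig_rel] at hs
  obtain ⟨w₀, h⟩ := le_iff_rel.1 hρ u v huv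
  have h := h w₀ subset_rfl
  classical
  -- `g` deletes the letters outside the common content of `u` and `v`
  let g : F →* F := FreeMonoid.lift fun i => if i ∈ con u then FreeMonoid.of i else 1
  have hg : ∀ t : F, con t ⊆ con u → g t = t := by
    intro t
    induction t using FreeMonoid.inductionOn' with
    | one => simp
    | of_mul c w ih =>
      intro ht
      rw [con_mul, con_of] at ht
      have hc : c ∈ con u := ht (Or.inl rfl)
      rw [map_mul, ih (Set.subset_union_right.trans ht)]
      simp [g, hc]
  have hgc : ∀ t : F, con (g t) ⊆ con u := by
    intro t a ha
    obtain ⟨b, _, hb⟩ := (mem_con_hom g t a).1 ha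
    by_cases h : b ∈ con u
    · simp [g, h, con_of] at hb
      rwa [hb]
    · simp [g, h, con_one] at hb
  have h2 := δ.2 g _ _ h
  rw [map_mul g, map_mul g, map_pow g, hg u subset_rfl, hg v (le_of_eq hs.symm)] at h2
  have e1 := ins u 1 (g w₀) (by simpa using hgc w₀)
  have e2 := ins v 1 (g w₀) (by simpa [← hs] using hgc w₀)
  rw [mul_one, mul_one] at e1 e2
  exact δ.1.trans e1 (δ.1.trans h2 (δ.1.symm e2))

/-- The median identity for `sig` in the lattice of fully invariant congruences. -/
lemma sig_neutral (η ζ : FICon) :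
    (sig ⊓ η) ⊔ (η ⊓ ζ) ⊔ (ζ ⊓ sig) = (sig ⊔ η) ⊓ (η ⊔ ζ) ⊓ (ζ ⊔ sig) := by
  apply le_antisymm
  · refine sup_le (sup_le ?_ ?_) ?_
    · exact le_inf (le_inf (inf_le_left.trans le_sup_left) (inf_le_right.trans le_sup_left))
        (inf_le_left.trans le_sup_right)
    · exact le_inf (le_inf (inf_le_left.trans le_sup_right) (inf_le_left.trans le_sup_left))
        (inf_le_right.trans le_sup_left)
    · exact le_inf (le_inf (inf_le_right.trans le_sup_left) (inf_le_left.trans le_sup_right))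
        (inf_le_left.trans le_sup_left)
  · by_cases hη : η ≤ sig <;> by_cases hζ : ζ ≤ sig
    · rw [inf_eq_right.2 hη, inf_eq_left.2 hζ]
      exact (inf_le_left.trans inf_le_right).trans (sup_le (le_sup_left.trans le_sup_left)
        le_sup_right)
    · rw [inf_eq_right.2 hη, sup_eq_left.2 hη]
      exact (inf_le_left.trans (sig_inf_sup_le hζ)).trans
        (sup_le (le_sup_left.trans le_sup_left) le_sup_right)
    · rw [inf_eq_left.2 hζ, sup_eq_right.2 hζ]
      have h1 : (sig ⊔ η) ⊓ (η ⊔ ζ) ⊓ sig ≤ sig ⊓ (ζ ⊔ η) :=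
        le_inf inf_le_right ((inf_le_left.trans inf_le_right).trans_eq (sup_comm _ _))
      refine (h1.trans (sig_inf_sup_le hη)).trans (sup_le le_sup_right ?_)
      rw [inf_comm η sig]
      exact le_sup_left.trans le_sup_left
    · refine (inf_le_left.trans inf_le_right).trans (sup_le ?_ ?_)
      · exact (group_le hη hζ).trans le_sup_left
      · refine (group_le hζ hη).trans (sup_le ?_ ?_)
        · rw [inf_comm sig ζ]; exact le_sup_right
        · rw [inf_comm ζ η]; exact le_sup_right.trans le_sup_left

/-- Commutativity and idempotency entail every identity between words of equal content. -/
lemma sig_le_of {α : FICon} (hi : α.1 (x * x) x) (hc : α.1 (x * y) (y * x)) : sig ≤ α := by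
  have hi' : ∀ w : F, α.1 (w * w) w := fun w => by
    have := α.2 (constHom w) _ _ hi
    simpa [constHom, x] using this
  have hc' : ∀ p q : F, α.1 (p * q) (q * p) := fun p q => by
    have := α.2 (FreeMonoid.lift fun i => if i = 0 then p else q) _ _ hc
    simpa [x, y] using this
  have letter : ∀ (a : ℕ) (u : F), a ∈ con u → α.1 (u * FreeMonoid.of a) u := by
    intro a u
    induction u using FreeMonoid.inductionOn' with
    | one => simp [con_one]
    | of_mul c w ih =>
      intro ha
      rw [con_mul, con_of] at ha
      rcases ha with rfl | ha
      · have h1 := α.1.mul (α.1.refl (FreeMonoid.of a)) (hc' w (FreeMonoid.of a))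
        have h2 := α.1.mul (hi' (FreeMonoid.of a)) (α.1.refl w)
        simp only [mul_assoc] at h1 h2 ⊢
        exact α.1.trans h1 h2
      · rw [mul_assoc]
        exact α.1.mul (α.1.refl _) (ih ha)
  have absorb : ∀ v u : F, con v ⊆ con u → α.1 (u * v) u := by
    intro v u
    induction v using FreeMonoid.inductionOn' with
    | one => intro _; rw [mul_one]; exact α.1.refl _
    | of_mul c w ih =>
      intro h
      rw [con_mul, con_of] at h
      rw [← mul_assoc]
      exact α.1.trans (α.1.mul (letter c u (h (Or.inl rfl))) (α.1.refl w))
        (ih (Set.subset_union_right.trans h))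
  refine le_iff_rel.2 fun u v huv => ?_
  rw [sig_rel] at huv
  exact α.1.trans (α.1.symm (absorb v u huv.symm.subset))
    (α.1.trans (hc' u v) (absorb u v huv.subset))

lemma SLv_eq : SLv = OrderDual.toDual sig := by
  have : gn {(x*x, x), (x*y, y*x)} = sig := by
    apply le_antisymm
    · refine gn_le fun u v h => ?_
      rcases h with h | h <;> obtain ⟨rfl, rfl⟩ := Prod.mk.inj h
      · rw [sig_rel, con_mul, Set.union_self]
      · rw [sig_rel, con_mul, con_mul, Set.union_comm]
    · exact sig_le_of (gn_rel (by simp)) (gn_rel (by simp))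
  exact congrArg OrderDual.toDual this

lemma SLv_neutral : IsNeutralElt SLv := by
  rw [SLv_eq]
  intro η ζ
  exact sig_neutral (OrderDual.ofDual η) (OrderDual.ofDual ζ)

/-! ### Lower-modular varieties and unbalanced identities -/

/-- The equational theory of a monoid `G`. -/
def thy (G : Type) [Monoid G] : FICon :=
  ⟨{ r := fun u v => ∀ φ : F →* G, φ u = φ v
     iseqv := ⟨fun _ _ => rfl, fun h φ => (h φ).symm, fun h h' φ => (h φ).trans (h' φ)⟩
     mul' := fun h h' φ => by rw [map_mul, map_mul, h φ, h' φ] },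
   fun f _ _ h φ => h (φ.comp f)⟩

/-- The rearrangements of a given word are separated by a finite group: with `B` larger than all
letters, the letter `a` acts on the integers modulo `B ^ |u| + 1` by `t ↦ B t + a`, so that a word
sends `0` to the number whose base `B` digits are its letters. -/
lemma exists_separating_group (u : F) : ∃ (γ : FICon) (n : ℕ), 1 ≤ n ∧
    (∀ w : F, γ.1 w (w ^ (n + 1))) ∧
    ∀ v : F, (FreeMonoid.toList u).Perm (FreeMonoid.toList v) → γ.1 u v → v = u := by
  by_cases hu : u = 1
  · refine ⟨⊤, 1, le_rfl, fun w => ?_, fun v hv _ => ?_⟩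
    · exact le_iff_rel.1 (le_top : thy Unit ≤ ⊤) _ _ fun _ => rfl
    · subst hu
      exact FreeMonoid.toList.injective (List.nil_perm.1 hv)
  obtain ⟨N, hN⟩ : ∃ N, (FreeMonoid.toList u).length = N + 1 :=
    Nat.exists_eq_succ_of_ne_zero fun h => hu (FreeMonoid.length_eq_zero.1 h)
  set B := (FreeMonoid.toList u).sum + 2 with hB
  have hlt : ∀ a ∈ FreeMonoid.toList u, a < B := fun a ha => by
    have := List.le_sum_of_mem ha
    omega
  set M := B ^ (N + 1) + 1 with hM
  have hunit : (B : ZMod M) * (-(B : ZMod M) ^ N) = 1 := by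
    have h0 : ((B ^ (N + 1) + 1 : ℕ) : ZMod M) = 0 := by rw [← hM]; exact ZMod.natCast_self M
    push_cast at h0
    have : (B : ZMod M) ^ (N + 1) = -1 := eq_neg_of_add_eq_zero_left h0
    rw [mul_neg, ← pow_succ', this, neg_neg]
  let aff : ℕ → Equiv.Perm (ZMod M) := fun a =>
    { toFun := fun t => a + B * t
      invFun := fun t => -(B : ZMod M) ^ N * (t - a)
      left_inv := fun t => by
        linear_combination t * hunit
      right_inv := fun t => by
        linear_combination (t - a) * hunit }
  have hval : ∀ w : F,
      FreeMonoid.lift aff w 0 = (Nat.ofDigits B (FreeMonoid.toList w) : ℕ) := by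
    intro w
    induction w using FreeMonoid.inductionOn' with
    | one => simp
    | of_mul c w ih =>
      rw [map_mul, Equiv.Perm.mul_apply, ih, FreeMonoid.toList_of_mul, Nat.ofDigits_cons]
      push_cast
      rfl
  refine ⟨thy (Equiv.Perm (ZMod M)), Nat.card (Equiv.Perm (ZMod M)), Nat.card_pos, ?_, ?_⟩
  · intro w φ
    rw [map_pow, pow_succ, pow_card_eq_one', one_mul]
  · intro v hp h
    have h1 := congrArg (fun g : Equiv.Perm (ZMod M) => g 0) (h (FreeMonoid.lift aff))
    simp only [hval] at h1
    rw [ZMod.natCast_eq_natCast_iff] at h1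
    have bound : ∀ l : List ℕ, (FreeMonoid.toList u).Perm l → Nat.ofDigits B l < M := by
      intro l hl
      have : Nat.ofDigits B l < B ^ l.length :=
        Nat.ofDigits_lt_base_pow_length (by omega) fun a ha => hlt a (hl.mem_iff.2 ha)
      rw [← hl.length_eq, hN] at this
      omega
    have h2 := Nat.ModEq.eq_of_lt_of_lt h1 (bound _ (List.Perm.refl _)) (bound _ hp)
    exact FreeMonoid.toList.injective (Nat.ofDigits_inj_of_len_eq (by omega) hp.length_eq hlt
      (fun a ha => hlt a (hp.mem_iff.2 ha)) h2).symm

lemma length_pow (w : F) (n : ℕ) : (w ^ n).length = n * w.length := by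
  induction n with
  | zero => simp
  | succ k ih => rw [pow_succ, FreeMonoid.length_mul, ih, Nat.succ_mul]

lemma length_pos {w : F} (h : w ≠ 1) : 1 ≤ w.length :=
  Nat.one_le_iff_ne_zero.2 fun h0 => h (FreeMonoid.length_eq_zero.1 h0)

/-- A proper lower-modular variety satisfies an identity that is not balanced. Otherwise let
`u ≈ v` be its shortest nontrivial identity and let `γ` be the theory of a finite group of exponent
`n` separating the rearrangements of `u`; then `u γ u^(n+1) β v^(n+1) γ v`, where
`u^(n+1) ≈ v^(n+1)` generates `β`, while `u` is alone in its class of `β ⊔ (θ ⊓ γ)`. -/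
lemma exists_unbalanced {V : MON} (hl : IsLowerModularElt V) (hV : V ≠ ⊤) :
    ∃ i j, i ≠ j ∧ (OrderDual.ofDual V).1 (x ^ i) (x ^ j) := by
  set θ := OrderDual.ofDual V with hθ
  by_contra! hb
  have perm : ∀ {u v : F}, θ.1 u v → (FreeMonoid.toList u).Perm (FreeMonoid.toList v) := by
    intro u v huv
    refine List.perm_iff_count.2 fun a => ?_
    by_contra hne
    exact hb _ _ hne (rel_count θ huv a)
  have hex : ∃ N, ∃ u v, θ.1 u v ∧ u ≠ v ∧ u.length = N := by
    by_contra! hno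
    apply hV
    have hle : θ ≤ ⊥ := le_iff_rel.2 fun u v huv => by
      have : u = v := by
        by_contra hne
        exact hno _ u v huv hne rfl
      rw [this]
      exact (⊥ : FICon).1.refl v
    exact top_le_iff.1 hle
  classical
  obtain ⟨u, v, huv, hne, hN⟩ := Nat.find_spec hex
  have hmin : ∀ {u' v' : F}, θ.1 u' v' → u' ≠ v' → u.length ≤ u'.length := by
    intro u' v' h h'
    rw [hN]
    exact Nat.find_min' hex ⟨u', v', h, h', rfl⟩
  have hu : 1 ≤ u.length := by
    refine length_pos fun h1 => hne ?_
    have := perm huv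
    subst h1
    exact (FreeMonoid.toList.injective (List.nil_perm.1 this)).symm
  obtain ⟨γ, n, hn, hexp, hsep⟩ := exists_separating_group u
  have hβ : gn {(u ^ (n + 1), v ^ (n + 1))} ≤ θ := by
    refine gn_le fun p q h => ?_
    obtain ⟨rfl, rfl⟩ := Prod.mk.inj h
    exact θ.1.pow (n + 1) huv
  have hrel : (gn {(u ^ (n + 1), v ^ (n + 1))} ⊔ γ).1 u v :=
    (gn {(u ^ (n + 1), v ^ (n + 1))} ⊔ γ).1.trans (sup_rel_right _ (hexp u))
      ((gn {(u ^ (n + 1), v ^ (n + 1))} ⊔ γ).1.trans (sup_rel_left _ (gn_rel rfl))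
        (sup_rel_right _ (γ.1.symm (hexp v))))
  have hfin := lower_rel hl hβ huv hrel
  refine hne (Sat.sup (P := {u}) ?_ ?_ u v hfin rfl).symm
  · refine Sat.gn fun p q h f c d => ?_
    obtain ⟨rfl, rfl⟩ := Prod.mk.inj h
    rw [map_pow, map_pow]
    by_cases hf : f u = f v
    · rw [hf]
    -- both rewritten words are longer than `u`
    · have h1 := hmin (θ.2 f u v huv) hf
      have h2 := hmin (θ.1.symm (θ.2 f u v huv)) (Ne.symm hf)
      have long : ∀ t : F, u.length ≤ t.length → c * t ^ (n + 1) * d ∉ ({u} : Set F) := by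
        intro t ht he
        have := congrArg FreeMonoid.length (Set.mem_singleton_iff.1 he)
        simp only [FreeMonoid.length_mul, length_pow] at this
        nlinarith
      exact iff_of_false (long _ h1) (long _ h2)
  · intro p q hpq hp
    obtain rfl := Set.mem_singleton_iff.1 hp
    obtain ⟨h1, h2⟩ := inf_rel.1 hpq
    exact hsep q (perm h1) h2

/-! ### Commuting powers in modular varieties -/

/-- Rewriting with `x^k y^k ≈ y^k x^k` does not affect words shorter than `2 k`. -/
lemma swap_step {k : ℕ} {P : Set F} (hP : ∀ w ∈ P, w.length < 2 * k) (f : F →* F) (c d : F) :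
    c * f (x ^ k * y ^ k) * d ∈ P ↔ c * f (y ^ k * x ^ k) * d ∈ P := by
  simp only [map_mul, map_pow]
  by_cases hx : f x = 1
  · simp [hx]
  by_cases hy : f y = 1
  · simp [hy]
  have h1 := length_pos hx
  have h2 := length_pos hy
  refine iff_of_false (fun h => ?_) (fun h => ?_) <;>
  · have h3 := hP _ h
    simp only [FreeMonoid.length_mul, length_pow] at h3
    nlinarith

lemma of_pow_head {a b m : ℕ} (hm : 1 ≤ m) {u v : F}
    (h : FreeMonoid.of a ^ m * u = FreeMonoid.of b ^ m * v) : a = b := by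
  obtain ⟨k, rfl⟩ := Nat.exists_eq_add_of_le' hm
  rw [pow_succ', pow_succ', mul_assoc, mul_assoc] at h
  exact (List.cons.inj h).1

lemma of_pow_pair {a b i j m : ℕ} (hm : 1 ≤ m)
    (h : FreeMonoid.of a ^ m * FreeMonoid.of b ^ m = FreeMonoid.of i ^ m * FreeMonoid.of j ^ m) :
    a = i ∧ b = j := by
  obtain rfl := of_pow_head hm h
  refine ⟨rfl, ?_⟩
  have h1 := mul_left_cancel h
  exact of_pow_head hm (u := 1) (v := 1) (by rw [h1])

/-- In a modular variety with `x^m ≈ x^(m+n)`, `m`-th powers commute. With `β` generated by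
`x^(m+n) y^(m+n) ≈ y^(m+n) x^(m+n)` the identity `x^m y^m ≈ y^m x^m` lies in `θ ⊔ β`, and `β` is
trivial on words of length `2 m`. -/
lemma pow_comm_of_modular {V : MON} (hmod : IsModularElt V) {m n : ℕ} (hm : 1 ≤ m) (hn : 1 ≤ n)
    (h : (OrderDual.ofDual V).1 (x ^ m) (x ^ (m + n))) :
    (OrderDual.ofDual V).1 (x ^ m * y ^ m) (y ^ m * x ^ m) := by
  set θ := OrderDual.ofDual V with hθ
  by_contra hno
  let γ : FICon := gn {(x ^ m * y ^ m, y ^ m * x ^ m),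
    (x ^ (m + n) * y ^ (m + n), y ^ (m + n) * x ^ (m + n))}
  let β : FICon := gn {(x ^ (m + n) * y ^ (m + n), y ^ (m + n) * x ^ (m + n))}
  have hβγ : β ≤ γ := gn_le fun u v huv => gn_rel (Or.inr huv)
  have hxy : ∀ p q : F, θ.1 (p ^ m * q ^ m) (p ^ (m + n) * q ^ (m + n)) := fun p q =>
    θ.1.mul (rel_x_pow θ h p) (rel_x_pow θ h q)
  have hrel : (θ ⊔ β).1 (x ^ m * y ^ m) (y ^ m * x ^ m) :=
    (θ ⊔ β).1.trans (sup_rel_left _ (hxy x y)) ((θ ⊔ β).1.trans (sup_rel_right _ (gn_rel rfl))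
      (sup_rel_left _ (θ.1.symm (hxy y x))))
  have hfin := modular_rel hmod hβγ (gn_rel (Or.inl rfl)) hrel
  have len : ∀ w ∈ ({x ^ m * y ^ m, y ^ m * x ^ m} : Set F), w.length = 2 * m := by
    rintro w (rfl | rfl) <;> simp [FreeMonoid.length_mul, length_pow, x, y] <;> ring
  have hγ : Sat γ {x ^ m * y ^ m, y ^ m * x ^ m} := by
    refine Sat.gn fun u v huv f c d => ?_
    rcases huv with huv | huv <;> obtain ⟨rfl, rfl⟩ := Prod.mk.inj huv
    · simp only [map_mul, map_pow]
      by_cases hx : f x = 1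
      · simp [hx]
      by_cases hy : f y = 1
      · simp [hy]
      have key : ∀ X Y : F, X ≠ 1 → Y ≠ 1 →
          c * (X ^ m * Y ^ m) * d ∈ ({x ^ m * y ^ m, y ^ m * x ^ m} : Set F) →
          c * (Y ^ m * X ^ m) * d ∈ ({x ^ m * y ^ m, y ^ m * x ^ m} : Set F) := by
        intro X Y hX hY hmem
        have h1 := length_pos hX
        have h2 := length_pos hY
        have h3 := len _ hmem
        simp only [FreeMonoid.length_mul, length_pow] at h3
        have hX1 : X.length = 1 := by nlinarith
        have hY1 : Y.length = 1 := by nlinarith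
        rw [hX1, hY1] at h3
        obtain rfl : c = 1 := FreeMonoid.length_eq_zero.1 (by omega)
        obtain rfl : d = 1 := FreeMonoid.length_eq_zero.1 (by omega)
        obtain ⟨a, rfl⟩ := FreeMonoid.length_eq_one.1 hX1
        obtain ⟨b, rfl⟩ := FreeMonoid.length_eq_one.1 hY1
        simp only [one_mul, mul_one] at hmem ⊢
        rcases hmem with hmem | hmem
        · obtain ⟨rfl, rfl⟩ := of_pow_pair hm hmem
          exact Or.inr rfl
        · obtain ⟨rfl, rfl⟩ := of_pow_pair hm hmem
          exact Or.inl rfl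
      exact ⟨key _ _ hx hy, key _ _ hy hx⟩
    · exact swap_step (fun w hw => by rw [len w hw]; omega) f c d
  have hout := Sat.sup (P := {x ^ m * y ^ m}) ?_ ?_ _ _ hfin rfl
  · rw [Set.mem_singleton_iff.1 hout] at hno
    exact hno (θ.1.refl _)
  · intro u v huv hu
    obtain rfl := Set.mem_singleton_iff.1 hu
    obtain ⟨h1, h2⟩ := inf_rel.1 huv
    rcases hγ _ _ h2 (Or.inl rfl) with rfl | rfl
    · rfl
    · exact absurd h1 hno
  · refine Sat.gn fun u v huv f c d => ?_
    obtain ⟨rfl, rfl⟩ := Prod.mk.inj huv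
    exact swap_step (fun w hw => by rw [len w (Or.inl hw)]; omega) f c d

/-! ### First letters, and commutativity from upper-modularity -/

/-- The first letter of a word, if any. -/
def hd (w : F) : Option ℕ := (FreeMonoid.toList w).head?

lemma hd_mul (u v : F) : hd (u * v) = (hd u).or (hd v) := by
  simp [hd]

lemma hd_pow (u : F) {m : ℕ} (hm : 1 ≤ m) : hd (u ^ m) = hd u := by
  induction m, hm using Nat.le_induction with
  | base => simp
  | succ k _ ih => rw [pow_succ, hd_mul, ih, Option.or_self]

/-- `x y ≈ x^m y^m` preserves the first letter of a word. -/
lemma sat_hd {m : ℕ} (hm : 1 ≤ m) : Sat (gn {(x * y, x ^ m * y ^ m)}) {w | hd w = some 0} := by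
  refine Sat.gn fun u v huv f c d => ?_
  obtain ⟨rfl, rfl⟩ := Prod.mk.inj huv
  simp [hd_mul, hd_pow _ hm]

lemma eq_or_eq_of_perm {w : F} (h : [0, 1].Perm (FreeMonoid.toList w)) :
    w = x * y ∨ w = y * x := by
  obtain ⟨a, b, rfl⟩ := FreeMonoid.length_eq_two.1 (h.length_eq.symm : w.length = 2)
  have h0 : 0 ∈ [a, b] := h.mem_iff.1 (by simp)
  have h1 : 1 ∈ [a, b] := h.mem_iff.1 (by simp)
  simp only [List.mem_cons, List.not_mem_nil, or_false] at h0 h1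
  have : (a = 0 ∧ b = 1) ∨ (a = 1 ∧ b = 0) := by omega
  rcases this with ⟨rfl, rfl⟩ | ⟨rfl, rfl⟩
  · exact Or.inl rfl
  · exact Or.inr rfl

/-- If no identity `x ≈ x^k` with `k ≠ 1` holds, then `{x y, y x}` is a union of classes. -/
lemma perm_of_rel {θ : FICon} (hno : ∀ k, θ.1 x (x ^ k) → k = 1) {u w : F}
    (hu : [0, 1].Perm (FreeMonoid.toList u)) (h : θ.1 u w) :
    [0, 1].Perm (FreeMonoid.toList w) := by
  refine List.perm_iff_count.2 fun a => ?_
  have h1 := rel_count θ h a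
  rw [← hu.count_eq] at h1
  by_cases ha : a = 0 ∨ a = 1
  · have h2 : [0, 1].count a = 1 := by rcases ha with rfl | rfl <;> rfl
    rw [h2, pow_one] at h1
    rw [h2, hno _ h1]
  · have h2 : [0, 1].count a = 0 := List.count_eq_zero_of_not_mem (by simpa using ha)
    rw [h2] at h1 ⊢
    have h3 := θ.1.mul (θ.1.refl x) h1
    rw [pow_zero, mul_one, ← pow_succ'] at h3
    have := hno _ h3
    omega

lemma hd_xy : hd (x * y) = some 0 := rfl

lemma hd_yx : hd (y * x) ≠ some 0 := by
  simp [hd, x, y]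

lemma rel_two (α : FICon) {m : ℕ} (h : α.1 (x * y) (x ^ m * y ^ m)) (p q : F) :
    α.1 (p * q) (p ^ m * q ^ m) := by
  have := α.2 (FreeMonoid.lift fun i => if i = 0 then p else q) _ _ h
  simpa [x, y] using this

/-- Upper-modularity turns commutation of `m`-th powers into commutativity, unless `x ≈ x^k` for
some `k ≠ 1`. Here `γ`, generated by `x y ≈ x^m y^m`, preserves first letters, so it does not
relate `x y` and `y x`, although `x y γ x^m y^m θ y^m x^m γ y x`. -/
lemma comm_of_upper {V : MON} (hu : IsUpperModularElt V)
    (hno : ∀ k, (OrderDual.ofDual V).1 x (x ^ k) → k = 1) {m : ℕ} (hm : 1 ≤ m)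
    (h : (OrderDual.ofDual V).1 (x ^ m * y ^ m) (y ^ m * x ^ m)) :
    (OrderDual.ofDual V).1 (x * y) (y * x) := by
  set θ := OrderDual.ofDual V with hθ
  by_contra hnc
  let κ : FICon := gn {(x * y, y * x)}
  let γ : FICon := gn {(x * y, x ^ m * y ^ m)}
  have hγ : ∀ p q : F, γ.1 (p * q) (p ^ m * q ^ m) := rel_two γ (gn_rel rfl)
  have hrel : (θ ⊔ γ).1 (x * y) (y * x) :=
    (θ ⊔ γ).1.trans (sup_rel_right _ (hγ x y)) ((θ ⊔ γ).1.trans (sup_rel_left _ h)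
      (sup_rel_right _ (γ.1.symm (hγ y x))))
  have hfin := upper_rel hu (β := θ ⊔ κ) le_sup_left (sup_rel_right _ (gn_rel rfl)) hrel
  have hP : Sat (θ ⊔ κ) {w | [0, 1].Perm (FreeMonoid.toList w)} := by
    refine Sat.sup ?_ (Sat.gn fun u v huv f c d => ?_)
    · exact fun u v huv hu' => perm_of_rel hno hu' huv
    · obtain ⟨rfl, rfl⟩ := Prod.mk.inj huv
      have : (FreeMonoid.toList (c * f (x * y) * d)).Perm
          (FreeMonoid.toList (c * f (y * x) * d)) := by
        simp only [map_mul, FreeMonoid.toList_mul]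
        exact (List.perm_append_comm.append_left _).append_right _
      exact ⟨fun h1 => h1.trans this, fun h1 => h1.trans this.symm⟩
  have hout := Sat.sup (P := {x * y}) ?_ ?_ _ _ hfin rfl
  · exact hd_yx ((congrArg hd (Set.mem_singleton_iff.1 hout)).trans hd_xy)
  · intro u v huv hu'
    obtain rfl := Set.mem_singleton_iff.1 hu'
    rcases eq_or_eq_of_perm (perm_of_rel hno (List.Perm.refl _) huv) with rfl | rfl
    · rfl
    · exact absurd huv hnc
  · intro u v huv hu'
    obtain rfl := Set.mem_singleton_iff.1 hu'
    obtain ⟨h1, h2⟩ := inf_rel.1 huv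
    rcases eq_or_eq_of_perm (hP _ _ h1 (List.Perm.refl _)) with rfl | rfl
    · rfl
    · exact absurd (sat_hd hm _ _ h2 hd_xy) hd_yx

/-- A commutative lower-modular variety satisfies some identity `x ≈ x^k` with `k ≠ 1`: otherwise
`x y γ x² y² β y² x² γ y x`, where `γ` preserves first letters and `β` fixes words of length `2`. -/
lemma false_of_lower {V : MON} (hl : IsLowerModularElt V)
    (hno : ∀ k, (OrderDual.ofDual V).1 x (x ^ k) → k = 1)
    (hc : (OrderDual.ofDual V).1 (x * y) (y * x)) : False := by
  set θ := OrderDual.ofDual V with hθ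
  let β : FICon := gn {(x ^ 2 * y ^ 2, y ^ 2 * x ^ 2)}
  let γ : FICon := gn {(x * y, x ^ 2 * y ^ 2)}
  have hγ : ∀ p q : F, γ.1 (p * q) (p ^ 2 * q ^ 2) := rel_two γ (gn_rel rfl)
  have hβ : β ≤ θ := by
    refine gn_le fun u v huv => ?_
    obtain ⟨rfl, rfl⟩ := Prod.mk.inj huv
    have := θ.2 (FreeMonoid.lift fun i => if i = 0 then x ^ 2 else y ^ 2) _ _ hc
    simpa [x, y] using this
  have hrel : (β ⊔ γ).1 (x * y) (y * x) :=
    (β ⊔ γ).1.trans (sup_rel_right _ (hγ x y)) ((β ⊔ γ).1.trans (sup_rel_left _ (gn_rel rfl))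
      (sup_rel_right _ (γ.1.symm (hγ y x))))
  have hfin := lower_rel hl hβ hc hrel
  have hout := Sat.sup (P := {x * y}) ?_ ?_ _ _ hfin rfl
  · exact hd_yx ((congrArg hd (Set.mem_singleton_iff.1 hout)).trans hd_xy)
  · refine Sat.gn fun u v huv f c d => ?_
    obtain ⟨rfl, rfl⟩ := Prod.mk.inj huv
    refine swap_step (fun w hw => ?_) f c d
    obtain rfl := Set.mem_singleton_iff.1 hw
    simp [x, y, FreeMonoid.length_mul]
  · intro u v huv hu'
    obtain rfl := Set.mem_singleton_iff.1 hu'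
    obtain ⟨h1, h2⟩ := inf_rel.1 huv
    rcases eq_or_eq_of_perm (perm_of_rel hno (List.Perm.refl _) h1) with rfl | rfl
    · rfl
    · exact absurd (sat_hd (by norm_num) _ _ h2 hd_xy) hd_yx

/-! ### Idempotency -/

lemma idem_aux {α : FICon} {n : ℕ} (hn : 1 ≤ n) (h : α.1 x (x ^ (1 + n)))
    (h' : α.1 (x ^ 2) (x ^ 3)) : α.1 (x * x) x := by
  obtain ⟨k, rfl⟩ := Nat.exists_eq_add_of_le' hn
  have h1 := α.1.mul h' (α.1.refl (x ^ k))
  rw [← pow_add, ← pow_add] at h1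
  have h2 := α.1.mul h (α.1.refl x)
  rw [← pow_succ] at h2
  have e1 : 2 + k = 1 + (k + 1) := by omega
  have e2 : 3 + k = 1 + (k + 1) + 1 := by omega
  rw [e1, e2] at h1
  exact α.1.symm (α.1.trans h (α.1.trans h1 (α.1.symm h2)))

lemma toList_s : FreeMonoid.toList s = [1, 0, 1, 2, 0, 2] := rfl

lemma toList_t : FreeMonoid.toList t = [1, 0, 2, 0, 1, 0, 2] := rfl

set_option maxRecDepth 100000 in
/-- The words `s` and `t` are square-free. -/
lemma square_free {c w d : F} (h : c * (w * w) * d ∈ ({s, t} : Set F)) : w = 1 := by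
  have key : ∀ l : List ℕ, (∀ k ∈ l.sublists, k ++ k <:+: l → k = []) →
      FreeMonoid.toList (c * (w * w) * d) = l → w = 1 := by
    intro l hl h
    have hinf : FreeMonoid.toList w ++ FreeMonoid.toList w <:+: l :=
      ⟨FreeMonoid.toList c, FreeMonoid.toList d, h⟩
    refine FreeMonoid.toList.injective (hl _ (List.mem_sublists.2 ?_) hinf)
    exact (List.sublist_append_left _ _).trans hinf.sublist
  rcases h with h | h
  · exact key _ (by decide) ((congrArg FreeMonoid.toList h).trans toList_s)
  · exact key _ (by decide) ((congrArg FreeMonoid.toList h).trans toList_t)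

/-- The class of `s` with respect to `x² ≈ x³` and `s ≈ t` is contained in `{s, t}`. -/
lemma sat_st : Sat (gn {(x * x, x * x * x), (s, t)}) {s, t} := by
  refine Sat.gn fun u v huv f c d => ?_
  rcases huv with huv | huv <;> obtain ⟨rfl, rfl⟩ := Prod.mk.inj huv
  · rw [map_mul, map_mul, map_mul]
    by_cases hx : f x = 1
    · simp [hx]
    · refine iff_of_false (fun h => hx (square_free h)) (fun h => hx ?_)
      refine square_free (c := c) (d := f x * d) ?_
      simpa only [mul_assoc] using h
  · have es : f s = f y * f x * f y * f z * f x * f z := by simp [s]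
    have et : f t = f y * f x * f z * f x * f y * f x * f z := by simp [t]
    rw [es, et]
    generalize f x = X
    generalize f y = Y
    generalize f z = Z
    -- a square at any position excludes membership in `{s, t}`
    have sq : ∀ p q w e : F, c * e * d = p * (w * w) * q → w ≠ 1 →
        c * e * d ∉ ({s, t} : Set F) := by
      intro p q w e he hw h
      rw [he] at h
      exact hw (square_free h)
    by_cases hX : X = 1
    · subst hX
      by_cases hY : Y = 1
      · simp [hY]
      · refine iff_of_false (sq c (Z * Z * d) Y _ (by simp [mul_assoc]) hY)
          (sq c d (Y * Z) _ (by simp [mul_assoc]) fun h => hY ?_)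
        have := congrArg FreeMonoid.length h
        rw [FreeMonoid.length_mul, FreeMonoid.length_one] at this
        exact FreeMonoid.length_eq_zero.1 (by omega)
    by_cases hY : Y = 1
    · subst hY
      refine iff_of_false (sq c d (X * Z) _ (by simp [mul_assoc]) fun h => hX ?_)
        (sq (c * X * Z) (Z * d) X _ (by simp [mul_assoc]) hX)
      have := congrArg FreeMonoid.length h
      rw [FreeMonoid.length_mul, FreeMonoid.length_one] at this
      exact FreeMonoid.length_eq_zero.1 (by omega)
    by_cases hZ : Z = 1
    · subst hZ
      refine iff_of_false (sq c d (Y * X) _ (by simp [mul_assoc]) fun h => hX ?_)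
        (sq (c * Y) (Y * X * d) X _ (by simp [mul_assoc]) hX)
      have := congrArg FreeMonoid.length h
      rw [FreeMonoid.length_mul, FreeMonoid.length_one] at this
      exact FreeMonoid.length_eq_zero.1 (by omega)
    have lX := length_pos hX
    have lY := length_pos hY
    have lZ := length_pos hZ
    have ls : s.length = 6 := rfl
    have lt : t.length = 7 := rfl
    constructor
    · intro h
      have hlen : (c * (Y * X * Y * Z * X * Z) * d).length ≤ 7 := by
        rcases h with h | h <;> rw [h] <;> omega
      simp only [FreeMonoid.length_mul] at hlen
      obtain ⟨i, rfl⟩ := FreeMonoid.length_eq_one.1 (show X.length = 1 by omega)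
      obtain ⟨j, rfl⟩ := FreeMonoid.length_eq_one.1 (show Y.length = 1 by omega)
      obtain ⟨k, rfl⟩ := FreeMonoid.length_eq_one.1 (show Z.length = 1 by omega)
      simp only [FreeMonoid.length_of] at hlen
      rcases h with h | h
      · have h' := congrArg FreeMonoid.length h
        simp only [FreeMonoid.length_mul, FreeMonoid.length_of, ls] at h'
        obtain rfl : c = 1 := FreeMonoid.length_eq_zero.1 (by omega)
        obtain rfl : d = 1 := FreeMonoid.length_eq_zero.1 (by omega)
        have h2 : [j, i, j, k, i, k] = [1, 0, 1, 2, 0, 2] := by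
          simpa [toList_s] using congrArg FreeMonoid.toList h
        simp only [List.cons.injEq] at h2
        obtain ⟨rfl, rfl, -, rfl, -⟩ := h2
        exact Or.inr rfl
      · exfalso
        by_cases hc : c = 1
        · subst hc
          have h2 : [j, i, j, k, i, k] ++ FreeMonoid.toList d = [1, 0, 2, 0, 1, 0, 2] := by
            simpa [toList_t] using congrArg FreeMonoid.toList h
          simp only [List.cons_append, List.cons.injEq] at h2
          omega
        · have lc := length_pos hc
          obtain ⟨e, rfl⟩ := FreeMonoid.length_eq_one.1 (show c.length = 1 by omega)
          have h2 : [e, j, i, j, k, i, k] ++ FreeMonoid.toList d = [1, 0, 2, 0, 1, 0, 2] := by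
            simpa [toList_t] using congrArg FreeMonoid.toList h
          simp only [List.cons_append, List.cons.injEq] at h2
          omega
    · intro h
      have hlen : (c * (Y * X * Z * X * Y * X * Z) * d).length ≤ 7 := by
        rcases h with h | h <;> rw [h] <;> omega
      simp only [FreeMonoid.length_mul] at hlen
      obtain ⟨i, rfl⟩ := FreeMonoid.length_eq_one.1 (show X.length = 1 by omega)
      obtain ⟨j, rfl⟩ := FreeMonoid.length_eq_one.1 (show Y.length = 1 by omega)
      obtain ⟨k, rfl⟩ := FreeMonoid.length_eq_one.1 (show Z.length = 1 by omega)
      obtain rfl : c = 1 := FreeMonoid.length_eq_zero.1 (by omega)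
      obtain rfl : d = 1 := FreeMonoid.length_eq_zero.1 (by omega)
      rcases h with h | h
      · have h' := congrArg FreeMonoid.length h
        simp [FreeMonoid.length_mul, ls] at h'
      · have h2 : [j, i, k, i, j, i, k] = [1, 0, 2, 0, 1, 0, 2] := by
          simpa [toList_t] using congrArg FreeMonoid.toList h
        simp only [List.cons.injEq] at h2
        obtain ⟨rfl, rfl, rfl, -⟩ := h2
        exact Or.inl rfl

/-- In a modular variety, commutativity and `x ≈ x^(1+n)` entail `x² ≈ x`. With `β` generated by
`x² ≈ x³`, the join `θ ⊔ β` contains every identity of semilattices, in particular `s ≈ t`; but if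
`x² ≈ x` fails then so does `s ≈ t`, as `x` occurs twice in `s` and three times in `t`. -/
lemma idem_of_modular {V : MON} (hmod : IsModularElt V) {n : ℕ} (hn : 1 ≤ n)
    (h : (OrderDual.ofDual V).1 x (x ^ (1 + n)))
    (hc : (OrderDual.ofDual V).1 (x * y) (y * x)) : (OrderDual.ofDual V).1 (x * x) x := by
  set θ := OrderDual.ofDual V with hθ
  by_contra hni
  have hst : ¬ θ.1 s t := fun hst => hni (idem_aux hn h (rel_count θ hst 0))
  let β : FICon := gn {(x * x, x * x * x)}
  let γ : FICon := gn {(x * x, x * x * x), (s, t)}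
  have hβγ : β ≤ γ := gn_le fun u v huv => gn_rel (Or.inl huv)
  have hsig : sig ≤ θ ⊔ β := by
    refine sig_le_of (idem_aux hn (sup_rel_left _ h) (sup_rel_right _ ?_)) (sup_rel_left _ hc)
    have : β.1 (x * x) (x * x * x) := gn_rel rfl
    rwa [← pow_two, ← pow_succ] at this
  have hcon : sig.1 s t := by
    rw [sig_rel, s, t]
    simp only [con_mul]
    ext a
    simp only [Set.mem_union]
    tauto
  have hfin := modular_rel hmod hβγ (gn_rel (Or.inr rfl)) (le_iff_rel.1 hsig s t hcon)
  have hout := Sat.sup (P := {s}) ?_ ?_ _ _ hfin rfl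
  · rw [Set.mem_singleton_iff.1 hout] at hst
    exact hst (θ.1.refl _)
  · intro u v huv hu
    obtain rfl := Set.mem_singleton_iff.1 hu
    obtain ⟨h1, h2⟩ := inf_rel.1 huv
    rcases sat_st _ _ h2 (Or.inl rfl) with rfl | rfl
    · rfl
    · exact absurd h1 hst
  · refine Sat.gn fun u v huv f c d => ?_
    obtain ⟨rfl, rfl⟩ := Prod.mk.inj huv
    rw [map_mul, map_mul, map_mul]
    by_cases hx : f x = 1
    · simp [hx]
    · refine iff_of_false (fun h => hx (square_free (Or.inl h))) (fun h => hx ?_)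
      refine square_free (c := c) (d := f x * d) (Or.inl ?_)
      simpa only [mul_assoc, Set.mem_singleton_iff] using h

/-! ### Classification -/

lemma classify {V : MON} (hmod : IsModularElt V) (hl : IsLowerModularElt V)
    (hu : IsUpperModularElt V) : V = ⊥ ∨ V = SLv ∨ V = ⊤ := by
  by_cases htop : V = ⊤
  · exact Or.inr (Or.inr htop)
  set θ := OrderDual.ofDual V with hθ
  obtain ⟨m, n, hm, hn, hmn⟩ : ∃ m n, 1 ≤ m ∧ 1 ≤ n ∧ θ.1 (x ^ m) (x ^ (m + n)) := by
    obtain ⟨i, j, hij, h⟩ := exists_unbalanced hl htop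
    have key : ∀ i j, i < j → θ.1 (x ^ i) (x ^ j) →
        ∃ m n, 1 ≤ m ∧ 1 ≤ n ∧ θ.1 (x ^ m) (x ^ (m + n)) := by
      intro i j hij h
      refine ⟨i + 1, j - i, by omega, by omega, ?_⟩
      have h1 := θ.1.mul h (θ.1.refl x)
      rw [← pow_succ, ← pow_succ] at h1
      rwa [show i + 1 + (j - i) = j + 1 by omega]
    rcases lt_or_gt_of_ne hij with hlt | hlt
    · exact key i j hlt h
    · exact key j i hlt (θ.1.symm h)
  obtain ⟨k, hk, hk1⟩ : ∃ k, θ.1 x (x ^ k) ∧ k ≠ 1 := by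
    by_contra! hno
    exact false_of_lower hl hno
      (comm_of_upper hu hno hm (pow_comm_of_modular hmod hm hn hmn))
  obtain ⟨p, hp, hxp⟩ : ∃ p, 1 ≤ p ∧ θ.1 x (x ^ (1 + p)) := by
    rcases Nat.eq_zero_or_pos k with rfl | hpos
    · refine ⟨1, le_rfl, ?_⟩
      have h1 := θ.1.mul hk (θ.1.refl x)
      rw [pow_zero, one_mul, ← pow_two] at h1
      exact θ.1.symm h1
    · exact ⟨k - 1, by omega, by rwa [show 1 + (k - 1) = k by omega]⟩
  have hc : θ.1 (x * y) (y * x) := by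
    have := pow_comm_of_modular hmod le_rfl hp (by rwa [pow_one] : θ.1 (x ^ 1) _)
    simpa only [pow_one] using this
  have hi := idem_of_modular hmod hp hxp hc
  have hsig : sig ≤ θ := sig_le_of hi hc
  by_cases hle : θ ≤ sig
  · refine Or.inr (Or.inl ?_)
    rw [SLv_eq]
    exact le_antisymm hsig hle
  · left
    obtain ⟨q, hq, hq'⟩ := exists_pow_rel_one hle
    have hone : ∀ w : F, θ.1 w 1 := fun w => by
      have h1 : sig.1 w (w ^ q) := by rw [sig_rel, con_pow w hq]
      exact θ.1.trans (le_iff_rel.1 hsig _ _ h1) (hq' w)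
    have hge : ⊤ ≤ θ := le_iff_rel.2 fun u v _ => θ.1.trans (hone u) (θ.1.symm (hone v))
    exact le_bot_iff.1 hge

lemma bot_neutral {L : Type*} [Lattice L] [BoundedOrder L] : IsNeutralElt (⊥ : L) := by
  intro b c
  simp only [bot_sup_eq, sup_bot_eq, bot_inf_eq, inf_bot_eq]
  exact le_antisymm (le_inf (inf_le_left.trans inf_le_left) inf_le_right)
    (le_inf (le_inf inf_le_left (inf_le_left.trans le_sup_left)) inf_le_right)

lemma top_neutral {L : Type*} [Lattice L] [BoundedOrder L] : IsNeutralElt (⊤ : L) := by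
  intro b c
  simp only [top_sup_eq, sup_top_eq, top_inf_eq, inf_top_eq]
  exact le_antisymm (sup_le (le_sup_left.trans le_sup_left) le_sup_right)
    (sup_le (sup_le le_sup_left (inf_le_left.trans le_sup_left)) le_sup_right)

theorem statement0 (V : MON) :
    [IsModularElt V ∧ IsLowerModularElt V ∧ IsUpperModularElt V,
     IsNeutralElt V,
     V = ⊥ ∨ V = SLv ∨ V = ⊤].TFAE := by
  tfae_have 1 → 3 := fun h => classify h.1 h.2.1 h.2.2
  tfae_have 3 → 2 := by
    rintro (rfl | rfl | rfl)
    · exact bot_neutral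
    · exact SLv_neutral
    · exact top_neutral
  tfae_have 2 → 1 := neutral_imp
  tfae_finish
end

section
/- For an element V of the lattice MON of monoid varieties, the following are equivalent: (i) V is a modular and upper-modular element of MON; (ii) V is a costandard element of MON; (iii) V is one of the four elements ⊥ (the trivial variety T), SL = ⟪{(x²,x),(xy,yx)}⟫, C₂ = ⟪{(x²,x³),(xy,yx)}⟫, or ⊤ (the variety of all monoids). -/
namespace MonoidVarieties

open FreeMonoid (of)

/-! ### Fully invariant congruences as a lattice -/

lemma ficon_le_iff {a b : FICon} : a ≤ b ↔ ∀ u v, a.1 u v → b.1 u v :=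
  ⟨fun h _ _ huv => (Con.le_def.mp h) huv, fun h => Con.le_def.mpr fun {u v} => h u v⟩

/-- The meet in `FICon` is the intersection. -/
lemma inf_apply {a b : FICon} {u v : F} : (a ⊓ b).1 u v ↔ a.1 u v ∧ b.1 u v := by
  constructor
  · exact fun h => ⟨ficon_le_iff.1 inf_le_left _ _ h, ficon_le_iff.1 inf_le_right _ _ h⟩
  · intro h
    let m : FICon := ⟨a.1 ⊓ b.1, fun f u v huv => ⟨a.2 f u v huv.1, b.2 f u v huv.2⟩⟩
    have hm : m ≤ a ⊓ b :=
      le_inf (ficon_le_iff.2 fun _ _ h => h.1) (ficon_le_iff.2 fun _ _ h => h.2)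
    exact ficon_le_iff.1 hm u v h

lemma sup_of_left {a b : FICon} {u v : F} (h : a.1 u v) : (a ⊔ b).1 u v :=
  ficon_le_iff.1 le_sup_left _ _ h

lemma sup_of_right {a b : FICon} {u v : F} (h : b.1 u v) : (a ⊔ b).1 u v :=
  ficon_le_iff.1 le_sup_right _ _ h

/-- `fiGen S` as an element of `FICon`. -/
def fic (S : Set (F × F)) : FICon := ⟨fiGen S, isFullyInvariant_fiGen S⟩

lemma fic_of_mem {S : Set (F × F)} {u v : F} (h : (u, v) ∈ S) : (fic S).1 u v :=
  (fiGen_apply S u v).2 fun _ hc => hc.2 _ h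

lemma fic_le {S : Set (F × F)} {c : FICon} (h : ∀ p ∈ S, c.1 p.1 p.2) : fic S ≤ c :=
  ficon_le_iff.2 fun u v huv => (fiGen_apply S u v).1 huv c.1 ⟨c.2, h⟩

/-- The largest fully invariant congruence saturating a set `K` of words: `u` and `v` are related
when every context and every endomorphism put them both into `K` or both outside `K`. -/
def synt (K : F → Prop) : FICon :=
  ⟨{ r := fun u v => ∀ (f : F →* F) (c d : F), K (c * f u * d) ↔ K (c * f v * d)
     iseqv := ⟨fun _ _ _ _ => Iff.rfl, fun h f c d => (h f c d).symm,
       fun h₁ h₂ f c d => (h₁ f c d).trans (h₂ f c d)⟩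
     mul' := by
       intro u u' v v' hu hv f c d
       have h₁ := hu f c (f v * d)
       have h₂ := hv f (c * f u') d
       simp only [map_mul, mul_assoc] at h₁ h₂ ⊢
       exact h₁.trans h₂ },
   fun g u v h f c d => h (f.comp g) c d⟩

lemma synt_iff {K : F → Prop} {u v : F} (h : (synt K).1 u v) : K u ↔ K v := by
  simpa using h (MonoidHom.id F) 1 1

lemma le_synt {K : F → Prop} {a : FICon} (h : ∀ u v, a.1 u v → K u → K v) : a ≤ synt K :=
  ficon_le_iff.2 fun u v huv f c d => by
    have key : a.1 (c * f u * d) (c * f v * d) :=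
      a.1.mul (a.1.mul (a.1.refl c) (a.2 f u v huv)) (a.1.refl d)
    exact ⟨h _ _ key, h _ _ (a.1.symm key)⟩

lemma sup_saturated {K : F → Prop} {a b : FICon} (ha : ∀ u v, a.1 u v → K u → K v)
    (hb : ∀ u v, b.1 u v → K u → K v) {u v : F} (h : (a ⊔ b).1 u v) (hu : K u) : K v :=
  (synt_iff (ficon_le_iff.1 (sup_le (le_synt ha) (le_synt hb)) u v h)).1 hu

/-- A word isolated in two fully invariant congruences is isolated in their join. -/
lemma sup_isolated {a b : FICon} {p : F} (ha : ∀ v, a.1 p v → v = p) (hb : ∀ v, b.1 p v → v = p)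
    {v : F} (h : (a ⊔ b).1 p v) : v = p :=
  sup_saturated (K := fun w => w = p) (fun _ v huv hu => ha v (hu ▸ huv))
    (fun _ v huv hu => hb v (hu ▸ huv)) h rfl

/-- The equational theory of a monoid `M`. -/
def thy (M : Type) [Monoid M] : FICon :=
  ⟨{ r := fun u v => ∀ f : F →* M, f u = f v
     iseqv := ⟨fun _ _ => rfl, fun h f => (h f).symm, fun h₁ h₂ f => (h₁ f).trans (h₂ f)⟩
     mul' := fun hu hv f => by simp only [map_mul, hu f, hv f] },
   fun g u v h f => h (f.comp g)⟩

/-! ### Counting letters -/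

/-- The number of occurrences of the letter `a` in `w`. -/
def cnt (a : ℕ) (w : F) : ℕ := (FreeMonoid.toList w).count a

@[simp] lemma cnt_one (a : ℕ) : cnt a 1 = 0 := by simp [cnt]
@[simp] lemma cnt_mul (a : ℕ) (u v : F) : cnt a (u * v) = cnt a u + cnt a v := by simp [cnt]
@[simp] lemma cnt_of (a b : ℕ) : cnt a (of b) = if b = a then 1 else 0 := by
  simp [cnt, List.count_singleton]
@[simp] lemma cnt_pow (a : ℕ) (u : F) (n : ℕ) : cnt a (u ^ n) = n * cnt a u := by
  induction n with
  | zero => simp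
  | succ n ih => rw [pow_succ, cnt_mul, ih]; ring

lemma length_pow' (u : F) (n : ℕ) : (u ^ n).length = n * u.length := by
  induction n with
  | zero => simp
  | succ n ih => rw [pow_succ, FreeMonoid.length_mul, ih]; ring

/-- The endomorphism sending the letter `a` to `X` and erasing the other letters. -/
def only (a : ℕ) (X : F) : F →* F := FreeMonoid.lift fun b => if b = a then X else 1

lemma only_of (a b : ℕ) (X : F) : only a X (of b) = if b = a then X else 1 := by
  simp [only]

lemma only_apply (a : ℕ) (X w : F) : only a X w = X ^ cnt a w := by
  induction w using FreeMonoid.inductionOn' with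
  | one => simp
  | of_mul b w ih =>
    rw [map_mul, ih, only_of, cnt_mul, cnt_of, pow_add]
    split_ifs <;> simp

lemma only_rel {θ : FICon} {u v : F} (h : θ.1 u v) (a : ℕ) (X : F) :
    θ.1 (X ^ cnt a u) (X ^ cnt a v) := by
  have := θ.2 (only a X) u v h
  rwa [only_apply, only_apply] at this

/-- The endomorphism sending `x` to `X`, `y` to `Y` and erasing the other letters. -/
def two (X Y : F) : F →* F := FreeMonoid.lift fun b => if b = 0 then X else if b = 1 then Y else 1

@[simp] lemma two_x (X Y : F) : two X Y x = X := by simp [two, x]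
@[simp] lemma two_y (X Y : F) : two X Y y = Y := by simp [two, y]

lemma subst_x {θ : FICon} {i j : ℕ} (h : θ.1 (x ^ i) (x ^ j)) (X : F) : θ.1 (X ^ i) (X ^ j) := by
  simpa using θ.2 (two X 1) _ _ h

/-- In a commutative theory an identity holds as soon as it holds letter by letter. -/
lemma rel_of_cnt {θ : FICon} (hc : θ.1 (x * y) (y * x)) {u v : F}
    (h : ∀ a, θ.1 (of a ^ cnt a u) (of a ^ cnt a v)) : θ.1 u v := by
  have comm : ∀ u v : F, θ.1 (u * v) (v * u) := fun u v => by
    simpa using θ.2 (two u v) _ _ hc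
  let _ : CommMonoid θ.1.Quotient :=
    { (inferInstance : Monoid θ.1.Quotient) with
      mul_comm := by
        rintro ⟨u⟩ ⟨v⟩
        exact (Con.eq θ.1).2 (comm u v) }
  let φ : F →* θ.1.Quotient :=
    { toFun := fun w => (w : θ.1.Quotient), map_one' := rfl, map_mul' := fun _ _ => rfl }
  have expand : ∀ (w : F) (s : Finset ℕ), (FreeMonoid.toList w).toFinset ⊆ s →
      φ w = ∏ a ∈ s, φ (of a ^ cnt a w) := by
    intro w s hs
    have h1 : φ w = ((FreeMonoid.toList w).map fun a => φ (of a)).prod := by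
      conv_lhs => rw [← FreeMonoid.lift_restrict φ]
      exact FreeMonoid.lift_apply _ _
    rw [h1, Finset.prod_list_map_count]
    simp only [map_pow]
    refine Finset.prod_subset hs fun a _ ha => ?_
    rw [List.mem_toFinset] at ha
    rw [List.count_eq_zero_of_not_mem ha, pow_zero]
  have : φ u = φ v := by
    rw [expand u _ (Finset.subset_union_left (s₂ := (FreeMonoid.toList v).toFinset)),
      expand v _ (Finset.subset_union_right (s₁ := (FreeMonoid.toList u).toFinset))]
    exact Finset.prod_congr rfl fun a _ => (Con.eq θ.1).2 (h a)
  exact (Con.eq θ.1).1 this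

/-! ### The theories of `SL` and `C₂` -/

/-- The theory of `SL`. -/
def slc : FICon := fic {(x*x, x), (x*y, y*x)}

/-- The theory of `C₂`. -/
def c2c : FICon := fic {(x*x, x*x*x), (x*y, y*x)}

lemma slc_comm : slc.1 (x * y) (y * x) := fic_of_mem (by simp)
lemma c2c_comm : c2c.1 (x * y) (y * x) := fic_of_mem (by simp)

lemma pow_of_sq {θ : FICon} (h : θ.1 (x * x) x) {n : ℕ} (hn : 1 ≤ n) : θ.1 x (x ^ n) := by
  induction n, hn using Nat.le_induction with
  | base => simpa using θ.1.refl x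
  | succ n _ ih =>
    rw [pow_succ]
    exact θ.1.trans (θ.1.symm h) (θ.1.mul ih (θ.1.refl x))

lemma pow_of_cube {θ : FICon} (h : θ.1 (x * x) (x * x * x)) {n : ℕ} (hn : 2 ≤ n) :
    θ.1 (x ^ 2) (x ^ n) := by
  rw [← sq] at h
  induction n, hn using Nat.le_induction with
  | base => exact θ.1.refl _
  | succ n _ ih =>
    rw [pow_succ]
    exact θ.1.trans h (θ.1.mul ih (θ.1.refl x))

lemma slc_of_cnt {u v : F} (h : ∀ a, cnt a u = 0 ↔ cnt a v = 0) : slc.1 u v := by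
  refine rel_of_cnt slc_comm fun a => ?_
  rcases Nat.eq_zero_or_pos (cnt a u) with h0 | h0
  · rw [h0, (h a).1 h0]
    exact slc.1.refl _
  · have h1 : 1 ≤ cnt a v := Nat.pos_of_ne_zero fun h' => h0.ne' ((h a).2 h')
    have hs : slc.1 (x * x) x := fic_of_mem (by simp)
    exact subst_x (slc.1.trans (slc.1.symm (pow_of_sq hs h0)) (pow_of_sq hs h1)) (of a)

lemma c2c_of_cnt {u v : F} (h : ∀ a, cnt a u = cnt a v ∨ (2 ≤ cnt a u ∧ 2 ≤ cnt a v)) :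
    c2c.1 u v := by
  refine rel_of_cnt c2c_comm fun a => ?_
  rcases h a with h0 | ⟨h0, h1⟩
  · rw [h0]
    exact c2c.1.refl _
  · have hs : c2c.1 (x * x) (x * x * x) := fic_of_mem (by simp)
    exact subst_x (c2c.1.trans (c2c.1.symm (pow_of_cube hs h0)) (pow_of_cube hs h1)) (of a)

/-- A theory not valid in `SL` contains an identity `xⁿ = 1` with `n ≥ 1`. -/
lemma exists_pow_one {α : FICon} (h : ¬ α ≤ slc) : ∃ n, 1 ≤ n ∧ α.1 (x ^ n) 1 := by
  rw [ficon_le_iff] at h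
  push Not at h
  obtain ⟨u, v, huv, hn⟩ := h
  have : ¬ ∀ a, cnt a u = 0 ↔ cnt a v = 0 := fun h => hn (slc_of_cnt h)
  push Not at this
  obtain ⟨a, ⟨h0, h1⟩ | ⟨h0, h1⟩⟩ := this
  · have := only_rel huv a x
    rw [h0, pow_zero] at this
    exact ⟨_, Nat.pos_of_ne_zero h1, α.1.symm this⟩
  · have := only_rel huv a x
    rw [h1, pow_zero] at this
    exact ⟨_, Nat.pos_of_ne_zero h0, this⟩

lemma mul_pow_one {α : FICon} {n : ℕ} (h : α.1 (x ^ n) 1) (u w : F) : α.1 u (w ^ n * u) := by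
  have h1 : α.1 (w ^ n) 1 := by simpa using subst_x (j := 0) (by simpa using h) w
  simpa using α.1.mul (α.1.symm h1) (α.1.refl u)

lemma x_of_pow {α : FICon} {n : ℕ} (h : α.1 (x ^ n) 1) : α.1 x (x ^ (n + 1)) := by
  rw [pow_succ]; exact mul_pow_one h x x

/-- A theory not valid in `C₂` contains an identity `x = xⁿ` with `n ≥ 2`. -/
lemma exists_pow_x {α : FICon} (h : ¬ α ≤ c2c) : ∃ n, 2 ≤ n ∧ α.1 x (x ^ n) := by
  rw [ficon_le_iff] at h
  push Not at h
  obtain ⟨u, v, huv, hn⟩ := h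
  have : ¬ ∀ a, cnt a u = cnt a v ∨ (2 ≤ cnt a u ∧ 2 ≤ cnt a v) := fun h => hn (c2c_of_cnt h)
  push Not at this
  obtain ⟨a, hne, h2⟩ := this
  have key : ∀ i j : ℕ, i < j → i < 2 → α.1 (x ^ i) (x ^ j) → ∃ n, 2 ≤ n ∧ α.1 x (x ^ n) := by
    intro i j hij hi hr
    interval_cases i
    · exact ⟨j + 1, by omega, x_of_pow (by simpa using α.1.symm hr)⟩
    · exact ⟨j, by omega, by simpa using hr⟩
  have hr := only_rel huv a x
  rcases lt_or_gt_of_ne hne with hl | hl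
  · exact key _ _ hl (by by_contra hh; have := h2 (by omega); omega) hr
  · exact key _ _ hl (by by_contra hh; have := h2 (by omega); omega) (α.1.symm hr)

/-! ### `SL` and `C₂` are costandard -/

lemma std_of_le {θ α β : FICon}
    (h : ∀ u v, (θ ⊔ α).1 u v → β.1 u v → ((θ ⊓ β) ⊔ (α ⊓ β)).1 u v) :
    (θ ⊔ α) ⊓ β = (θ ⊓ β) ⊔ (α ⊓ β) := by
  apply le_antisymm
  · exact ficon_le_iff.2 fun u v huv => h u v (inf_apply.1 huv).1 (inf_apply.1 huv).2
  · exact sup_le (inf_le_inf_right _ le_sup_left) (inf_le_inf_right _ le_sup_right)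

/-- Replacing the words `u`, `v` by `α ⊓ β`-equivalent words that are `θ`-equivalent. -/
lemma std_step {θ α β : FICon} {u v u' v' : F} (hu : (α ⊓ β).1 u u') (hv : (α ⊓ β).1 v v')
    (huv : β.1 u v) (hθ : θ.1 u' v') : ((θ ⊓ β) ⊔ (α ⊓ β)).1 u v := by
  have hβ : β.1 u' v' := β.1.trans (β.1.symm (inf_apply.1 hu).2)
    (β.1.trans huv (inf_apply.1 hv).2)
  refine Con.trans _ (sup_of_right hu) (Con.trans _ (sup_of_left (inf_apply.2 ⟨hθ, hβ⟩)) ?_)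
  exact sup_of_right (Con.symm _ hv)

lemma inf_pow_one {α β : FICon} {n m : ℕ} (ha : α.1 (x ^ n) 1) (hb : β.1 (x ^ m) 1) :
    (α ⊓ β).1 (x ^ (2 * (n * m))) 1 := by
  refine inf_apply.2 ⟨?_, ?_⟩
  · have := α.1.pow (2 * m) ha
    rwa [one_pow, ← pow_mul, show n * (2 * m) = 2 * (n * m) by ring] at this
  · have := β.1.pow (2 * n) hb
    rwa [one_pow, ← pow_mul, show m * (2 * n) = 2 * (n * m) by ring] at this

/-- If neither `α` nor `β` holds in `SL`, both are theories of periodic groups, and multiplying by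
a power of `u * v` makes the content of `u` and `v` equal and all letters multiple. -/
lemma std_of_pow_one {θ α β : FICon} (hθ : c2c ≤ θ) {n m : ℕ} (hn : 1 ≤ n) (hm : 1 ≤ m)
    (ha : α.1 (x ^ n) 1) (hb : β.1 (x ^ m) 1) {u v : F} (huv : β.1 u v) :
    ((θ ⊓ β) ⊔ (α ⊓ β)).1 u v := by
  have h := inf_pow_one ha hb
  refine std_step (mul_pow_one h u (u * v)) (mul_pow_one h v (u * v)) huv
    (ficon_le_iff.1 hθ _ _ (c2c_of_cnt fun a => ?_))
  have hp : 1 ≤ n * m := Nat.mul_pos hn hm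
  simp only [cnt_mul, cnt_pow]
  rcases Nat.eq_zero_or_pos (cnt a u + cnt a v) with h0 | h0
  · left; omega
  · right
    have : 2 * 1 ≤ 2 * (n * m) * (cnt a u + cnt a v) :=
      Nat.mul_le_mul (Nat.mul_le_mul_left 2 hp) h0 |>.trans' (by omega)
    omega

lemma c2c_le_slc : c2c ≤ slc := by
  refine fic_le ?_
  rintro p (rfl | rfl)
  · have hs : slc.1 (x * x) x := fic_of_mem (by simp)
    exact slc.1.mul (slc.1.symm hs) (slc.1.refl x)
  · exact slc_comm

lemma slc_std (α β : FICon) : (slc ⊔ α) ⊓ β = (slc ⊓ β) ⊔ (α ⊓ β) := by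
  refine std_of_le fun u v h huv => ?_
  by_cases hα : α ≤ slc
  · rw [sup_eq_left.2 hα] at h
    exact sup_of_left (inf_apply.2 ⟨h, huv⟩)
  by_cases hβ : β ≤ slc
  · exact sup_of_left (inf_apply.2 ⟨ficon_le_iff.1 hβ _ _ huv, huv⟩)
  obtain ⟨n, hn, ha⟩ := exists_pow_one hα
  obtain ⟨m, hm, hb⟩ := exists_pow_one hβ
  exact std_of_pow_one c2c_le_slc hn hm ha hb huv

/-- `SL` separates words of different content: the set of words omitting the letter `a` is
saturated by the defining identities of `SL`. -/
lemma cnt_of_slc {u v : F} (h : slc.1 u v) (a : ℕ) : cnt a u = 0 ↔ cnt a v = 0 := by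
  have hle : slc ≤ synt fun w => cnt a w = 0 := by
    refine fic_le ?_
    rintro p (rfl | rfl) f c d <;> simp only [cnt_mul, map_mul] <;> omega
  exact synt_iff (ficon_le_iff.1 hle u v h)

lemma x_pow_iter {α : FICon} {n : ℕ} (h : α.1 x (x ^ (n + 1))) (k : ℕ) :
    α.1 x (x ^ (n * k + 1)) := by
  induction k with
  | zero => simpa using α.1.refl x
  | succ k ih =>
    have h1 := α.1.mul (α.1.refl (x ^ (n * k))) h
    rw [← pow_succ, ← pow_add, show n * k + (n + 1) = n * (k + 1) + 1 by ring] at h1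
    exact α.1.trans ih h1

/-- The endomorphism raising every letter to the power `N`. -/
def powHom (N : ℕ) : F →* F := FreeMonoid.lift fun a => of a ^ N

lemma powHom_of (N a : ℕ) : powHom N (of a) = of a ^ N := by simp [powHom]

lemma cnt_powHom (N a : ℕ) (w : F) : cnt a (powHom N w) = N * cnt a w := by
  induction w using FreeMonoid.inductionOn' with
  | one => simp
  | of_mul b w ih => rw [map_mul, cnt_mul, ih, powHom_of, cnt_pow, cnt_mul]; ring

lemma rel_powHom {γ : FICon} {N : ℕ} (h : γ.1 x (x ^ N)) (w : F) : γ.1 w (powHom N w) := by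
  induction w using FreeMonoid.inductionOn' with
  | one => simpa using γ.1.refl 1
  | of_mul b w ih =>
    rw [map_mul (powHom N), powHom_of]
    exact γ.1.mul (by simpa using subst_x (i := 1) (by simpa using h) (of b)) ih

lemma c2c_std (α β : FICon) : (c2c ⊔ α) ⊓ β = (c2c ⊓ β) ⊔ (α ⊓ β) := by
  refine std_of_le fun u v h huv => ?_
  by_cases hα : α ≤ c2c
  · rw [sup_eq_left.2 hα] at h
    exact sup_of_left (inf_apply.2 ⟨h, huv⟩)
  by_cases hβ : β ≤ c2c
  · exact sup_of_left (inf_apply.2 ⟨ficon_le_iff.1 hβ _ _ huv, huv⟩)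
  by_cases hc : slc.1 u v
  · -- equal content: raising all letters to a common power `N ≥ 2` removes the simple letters
    obtain ⟨n, hn, ha⟩ := exists_pow_x hα
    obtain ⟨m, hm, hb⟩ := exists_pow_x hβ
    obtain ⟨n, rfl⟩ : ∃ k, n = k + 1 := ⟨n - 1, by omega⟩
    obtain ⟨m, rfl⟩ : ∃ k, m = k + 1 := ⟨m - 1, by omega⟩
    have hN : (α ⊓ β).1 x (x ^ (n * m + 1)) :=
      inf_apply.2 ⟨x_pow_iter ha m, by rw [mul_comm]; exact x_pow_iter hb n⟩
    have hp : 1 ≤ n * m := Nat.mul_pos (by omega) (by omega)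
    refine std_step (rel_powHom hN u) (rel_powHom hN v) huv (c2c_of_cnt fun a => ?_)
    rw [cnt_powHom, cnt_powHom]
    rcases Nat.eq_zero_or_pos (cnt a u) with h0 | h0
    · left; rw [h0, (cnt_of_slc hc a).1 h0]
    · right
      have h1 : 1 ≤ cnt a v := Nat.pos_of_ne_zero fun h' => h0.ne' ((cnt_of_slc hc a).2 h')
      constructor <;> nlinarith
  · have hα' : ¬ α ≤ slc := fun hle =>
      hc (ficon_le_iff.1 (sup_le c2c_le_slc hle) _ _ h)
    have hβ' : ¬ β ≤ slc := fun hle => hc (ficon_le_iff.1 hle _ _ huv)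
    obtain ⟨n, hn, ha⟩ := exists_pow_one hα'
    obtain ⟨m, hm, hb⟩ := exists_pow_one hβ'
    exact std_of_pow_one le_rfl hn hm ha hb huv

/-! ### Lattice-theoretic reductions -/

lemma costandard_of_std {θ : FICon} (h : ∀ α β : FICon, (θ ⊔ α) ⊓ β = (θ ⊓ β) ⊔ (α ⊓ β)) :
    IsCostandardElt (OrderDual.toDual θ : MON) :=
  fun a b => h (OrderDual.ofDual a) (OrderDual.ofDual b)

lemma modular_upper_of_costandard {L : Type*} [Lattice L] {a : L} (h : IsCostandardElt a) :
    IsModularElt a ∧ IsUpperModularElt a := by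
  constructor
  · intro b c hbc
    rw [h c b, sup_eq_left.2 hbc]
  · intro b c hb
    rw [sup_comm b (a ⊓ c), h c b, sup_eq_left.2 hb, sup_comm]

/-! ### Consequences of modularity -/

/-- Modularity of a variety, transported to its theory. -/
def ConModular (θ : FICon) : Prop := ∀ α β : FICon, β ≤ α → (θ ⊓ α) ⊔ β = (θ ⊔ β) ⊓ α

/-- Upper-modularity of a variety, transported to its theory. -/
def ConUpper (θ : FICon) : Prop := ∀ α β : FICon, θ ≤ α → θ ⊔ (α ⊓ β) = α ⊓ (θ ⊔ β)

/-- The way modularity is used: if `p₁ θ p₂` and `p₃ θ p₄`, and if the class of `p₁` modulo the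
identities `p₁ = p₃`, `p₂ = p₄` is `{p₁, p₃}` because no application of `p₂ = p₄` reaches it, then
`p₁ θ p₃`. Indeed `(p₁, p₃)` lies in `(θ ⊔ β) ⊓ α` for `α = ⟨p₁ = p₃, p₂ = p₄⟩` and
`β = ⟨p₂ = p₄⟩`, while `p₁` is isolated in `β`. -/
lemma ConModular.rel {θ : FICon} (hm : ConModular θ) {p₁ p₂ p₃ p₄ : F} (h₁₂ : θ.1 p₁ p₂)
    (h₃₄ : θ.1 p₃ p₄) (hne : p₃ ≠ p₁)
    (h₁₃ : ∀ (f : F →* F) (c d : F), (c * f p₁ * d = p₁ ∨ c * f p₁ * d = p₃) ↔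
      (c * f p₃ * d = p₁ ∨ c * f p₃ * d = p₃))
    (h₂₄ : ∀ f : F →* F, f p₂ = f p₄ ∨ ∀ c d : F,
      ¬ (c * f p₂ * d = p₁ ∨ c * f p₂ * d = p₃) ∧ ¬ (c * f p₄ * d = p₁ ∨ c * f p₄ * d = p₃)) :
    θ.1 p₁ p₃ := by
  set α : FICon := fic {(p₁, p₃), (p₂, p₄)} with hα
  set β : FICon := fic {(p₂, p₄)} with hβ
  have hle : β ≤ α := fic_le (by rintro p rfl; exact fic_of_mem (by simp))
  have αclass : ∀ w, α.1 p₁ w → w = p₁ ∨ w = p₃ := by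
    have : α ≤ synt fun w => w = p₁ ∨ w = p₃ := by
      refine fic_le ?_
      rintro p (rfl | rfl) f c d
      · exact h₁₃ f c d
      · rcases h₂₄ f with h | h
        · simp only [h]
        · exact iff_of_false (h c d).1 (h c d).2
    exact fun w hw => (synt_iff (ficon_le_iff.1 this _ _ hw)).1 (Or.inl rfl)
  have βclass : ∀ w, β.1 p₁ w → w = p₁ := by
    have : β ≤ synt fun w => w = p₁ := by
      refine fic_le ?_
      rintro p rfl f c d
      rcases h₂₄ f with h | h
      · simp only [h]
      · exact iff_of_false (fun h' => (h c d).1 (Or.inl h')) (fun h' => (h c d).2 (Or.inl h'))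
    exact fun w hw => (synt_iff (ficon_le_iff.1 this _ _ hw)).1 rfl
  have hmem : ((θ ⊓ α) ⊔ β).1 p₁ p₃ := by
    rw [hm α β hle]
    refine inf_apply.2 ⟨?_, fic_of_mem (by simp)⟩
    exact Con.trans _ (sup_of_left h₁₂)
      (Con.trans _ (sup_of_right (fic_of_mem (by simp))) (sup_of_left (θ.1.symm h₃₄)))
  by_contra hn
  refine hne (sup_isolated (fun w hw => ?_) βclass hmem)
  obtain ⟨h1, h2⟩ := inf_apply.1 hw
  rcases αclass w h2 with rfl | rfl
  · rfl
  · exact absurd h1 hn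

lemma length_ne_zero {w : F} (h : w ≠ 1) : 1 ≤ w.length :=
  Nat.pos_of_ne_zero fun h0 => h (FreeMonoid.length_eq_zero.1 h0)

/-- If `XᵃY` or `YXᵃ`, with `X`, `Y` nonempty, is a factor of `xᵃy` or `yxᵃ`, then it is the whole
word and `X`, `Y` are the letters `x`, `y`, possibly interchanged when `a = 1`. -/
lemma rigid_xpow {a : ℕ} (ha : 1 ≤ a) {X Y c d p q : F} (hX : X ≠ 1) (hY : Y ≠ 1)
    (hp : p = X ^ a * Y ∨ p = Y * X ^ a) (hq : q = x ^ a * y ∨ q = y * x ^ a)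
    (h : c * p * d = q) :
    c = 1 ∧ d = 1 ∧ ((X = x ∧ Y = y) ∨ (a = 1 ∧ X = y ∧ Y = x)) := by
  have hX' := length_ne_zero hX
  have hY' := length_ne_zero hY
  have hpl : p.length = a * X.length + Y.length := by
    rcases hp with rfl | rfl <;> rw [FreeMonoid.length_mul, length_pow']
    ring
  have hql : q.length = a + 1 := by
    rcases hq with rfl | rfl <;> rw [FreeMonoid.length_mul, length_pow'] <;> simp [x, y]
    ring
  have hl := congrArg FreeMonoid.length h
  rw [FreeMonoid.length_mul, FreeMonoid.length_mul, hpl, hql] at hl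
  have h1 : a * 1 ≤ a * X.length := Nat.mul_le_mul_left a hX'
  have hc : c = 1 := FreeMonoid.length_eq_zero.1 (by omega)
  have hd : d = 1 := FreeMonoid.length_eq_zero.1 (by omega)
  have hXl : X.length = 1 := by
    have : a * X.length = a * 1 := by omega
    exact Nat.eq_of_mul_eq_mul_left (by omega) this
  obtain ⟨i, rfl⟩ := FreeMonoid.length_eq_one.1 hXl
  obtain ⟨j, rfl⟩ := FreeMonoid.length_eq_one.1 (show Y.length = 1 by omega)
  refine ⟨hc, hd, ?_⟩
  subst hc hd
  have cx : a * (if i = 0 then 1 else 0) + (if j = 0 then 1 else 0) = a := by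
    have := congrArg (cnt 0) h
    rcases hp with rfl | rfl <;> rcases hq with rfl | rfl <;> simp [x, y] at this ⊢ <;> omega
  have cy : a * (if i = 1 then 1 else 0) + (if j = 1 then 1 else 0) = 1 := by
    have := congrArg (cnt 1) h
    rcases hp with rfl | rfl <;> rcases hq with rfl | rfl <;> simp [x, y] at this ⊢ <;> omega
  by_cases hi : i = 0
  · subst hi
    have hj : j = 1 := by by_contra hj; simp [hj] at cy
    subst hj
    exact Or.inl ⟨rfl, rfl⟩
  · simp only [hi, if_false, mul_zero, zero_add] at cx
    have hj : j = 0 := by by_contra hj; simp [hj] at cx; omega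
    subst hj
    simp only [if_true] at cx
    have hi1 : i = 1 := by by_contra hi1; simp [hi1] at cy
    subst hi1
    exact Or.inr ⟨cx.symm, rfl, rfl⟩

/-- A periodic modular variety has central `a`-th powers. -/
lemma ConModular.central {θ : FICon} (hm : ConModular θ) {a b : ℕ} (ha : 1 ≤ a) (hab : a < b)
    (h : θ.1 (x ^ a) (x ^ b)) : θ.1 (x ^ a * y) (y * x ^ a) := by
  refine hm.rel (p₂ := x ^ b * y) (p₄ := y * x ^ b) (θ.1.mul h (θ.1.refl y))
    (θ.1.mul (θ.1.refl y) h) ?_ ?_ ?_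
  · intro he
    have := congrArg FreeMonoid.toList he
    obtain ⟨a, rfl⟩ : ∃ k, a = k + 1 := ⟨a - 1, by omega⟩
    rw [pow_succ'] at this
    simp [x, y] at this
  · intro f c d
    simp only [map_mul, map_pow]
    by_cases hX : f x = 1
    · simp [hX]
    by_cases hY : f y = 1
    · simp [hY]
    -- a non-erasing instance of one of the two words inside the pair forces the other one
    have fwd : ∀ p q : F, (p = f x ^ a * f y ∨ p = f y * f x ^ a) →
        (q = x ^ a * y ∨ q = y * x ^ a) → c * p * d = q →
        ∀ p' : F, (p' = f x ^ a * f y ∨ p' = f y * f x ^ a) →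
        (c * p' * d = x ^ a * y ∨ c * p' * d = y * x ^ a) := by
      intro p q hp hq he p' hp'
      obtain ⟨rfl, rfl, ⟨h1, h2⟩ | ⟨rfl, h1, h2⟩⟩ := rigid_xpow ha hX hY hp hq he <;>
      rw [h1, h2] at hp' <;> rcases hp' with rfl | rfl <;> simp
    constructor
    · rintro (he | he)
      · exact fwd _ _ (Or.inl rfl) (Or.inl rfl) he _ (Or.inr rfl)
      · exact fwd _ _ (Or.inl rfl) (Or.inr rfl) he _ (Or.inr rfl)
    · rintro (he | he)
      · exact fwd _ _ (Or.inr rfl) (Or.inl rfl) he _ (Or.inl rfl)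
      · exact fwd _ _ (Or.inr rfl) (Or.inr rfl) he _ (Or.inl rfl)
  · intro f
    simp only [map_mul, map_pow]
    by_cases hX : f x = 1
    · simp [hX]
    by_cases hY : f y = 1
    · simp [hY]
    -- the images of the `b`-words are too long
    right
    intro c d
    have hX' := length_ne_zero hX
    have hY' := length_ne_zero hY
    have h1 : b * 1 ≤ b * (f x).length := Nat.mul_le_mul_left b hX'
    refine ⟨?_, ?_⟩ <;> rintro (he | he) <;>
    · have hl := congrArg FreeMonoid.length he
      simp only [FreeMonoid.length_mul, length_pow'] at hl
      simp [x, y] at hl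
      simp [x, y] at h1 hY'
      omega

/-! ### Balanced identities in two letters -/

/-- The submonoid of words in the letters `x`, `y`. -/
def xyWords : Submonoid F := Submonoid.closure {x, y}

lemma x_mem : x ∈ xyWords := Submonoid.subset_closure (by simp)
lemma y_mem : y ∈ xyWords := Submonoid.subset_closure (by simp)

lemma xy_induction {P : (w : F) → w ∈ xyWords → Prop} (hx : P x x_mem) (hy : P y y_mem)
    (h1 : P 1 (one_mem _))
    (hmul : ∀ u v hu hv, P u hu → P v hv → P (u * v) (mul_mem hu hv)) {w : F}
    (hw : w ∈ xyWords) : P w hw := by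
  induction hw using Submonoid.closure_induction with
  | mem w hw => rcases hw with rfl | rfl <;> assumption
  | one => exact h1
  | mul u v hu hv hu' hv' => exact hmul u v hu hv hu' hv'

lemma length_map {f : F →* F} {w : F} (hw : w ∈ xyWords) :
    (f w).length = cnt 0 w * (f x).length + cnt 1 w * (f y).length := by
  induction hw using xy_induction with
  | hx => simp [x]
  | hy => simp [y]
  | h1 => simp
  | hmul u v _ _ hu hv => rw [map_mul, FreeMonoid.length_mul, hu, hv, cnt_mul, cnt_mul]; ring

lemma map_of_y_one {f : F →* F} (hf : f y = 1) {w : F} (hw : w ∈ xyWords) :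
    f w = f x ^ cnt 0 w := by
  induction hw using xy_induction with
  | hx => simp [x]
  | hy => rw [hf]; simp [y]
  | h1 => simp
  | hmul u v _ _ hu hv => rw [map_mul, hu, hv, cnt_mul, pow_add]

lemma map_of_x_one {f : F →* F} (hf : f x = 1) {w : F} (hw : w ∈ xyWords) :
    f w = f y ^ cnt 1 w := by
  induction hw using xy_induction with
  | hx => rw [hf]; simp [x]
  | hy => simp [y]
  | h1 => simp
  | hmul u v _ _ hu hv => rw [map_mul, hu, hv, cnt_mul, pow_add]

lemma map_of_id {f : F →* F} (hx : f x = x) (hy : f y = y) {w : F} (hw : w ∈ xyWords) :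
    f w = w := by
  induction hw using xy_induction with
  | hx => exact hx
  | hy => exact hy
  | h1 => simp
  | hmul u v _ _ hu hv => rw [map_mul, hu, hv]

lemma cnt_map {f : F →* F} (a : ℕ) {w : F} (hw : w ∈ xyWords) :
    cnt a (f w) = cnt 0 w * cnt a (f x) + cnt 1 w * cnt a (f y) := by
  induction hw using xy_induction with
  | hx => simp [x]
  | hy => simp [y]
  | h1 => simp
  | hmul u v _ _ hu hv => rw [map_mul, cnt_mul, hu, hv, cnt_mul, cnt_mul]; ring

/-- Words starting with `x` in which `x` and `y` both occur `m ≥ 1` times contain no instances of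
one another under non-erasing substitutions, except by the substitution fixing `x` and `y`. -/
lemma rigid_xy {f : F →* F} {m : ℕ} (hm : 1 ≤ m) {c d p q : F} (hp : x * p ∈ xyWords)
    (hq : x * q ∈ xyWords) (hp0 : cnt 0 (x * p) = m) (hp1 : cnt 1 (x * p) = m)
    (hq0 : cnt 0 (x * q) = m) (hq1 : cnt 1 (x * q) = m) (hX : f x ≠ 1) (hY : f y ≠ 1)
    (h : c * f (x * p) * d = x * q) : c = 1 ∧ d = 1 ∧ f x = x ∧ f y = y := by
  have hX' := length_ne_zero hX
  have hY' := length_ne_zero hY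
  have hql : (x * q).length = 2 * m := by
    have := length_map (f := MonoidHom.id F) hq
    simp only [MonoidHom.id_apply, hq0, hq1] at this
    rw [this]; simp [x, y]; ring
  have hl := congrArg FreeMonoid.length h
  rw [FreeMonoid.length_mul, FreeMonoid.length_mul, length_map hp, hp0, hp1, hql] at hl
  have h1 : m * 1 ≤ m * (f x).length := Nat.mul_le_mul_left m hX'
  have h2 : m * 1 ≤ m * (f y).length := Nat.mul_le_mul_left m hY'
  have hc : c = 1 := FreeMonoid.length_eq_zero.1 (by omega)
  have hd : d = 1 := FreeMonoid.length_eq_zero.1 (by omega)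
  have hXl : (f x).length = 1 :=
    Nat.eq_of_mul_eq_mul_left (show 0 < m by omega) (by omega)
  have hYl : (f y).length = 1 :=
    Nat.eq_of_mul_eq_mul_left (show 0 < m by omega) (by omega)
  obtain ⟨i, hi⟩ := FreeMonoid.length_eq_one.1 hXl
  obtain ⟨j, hj⟩ := FreeMonoid.length_eq_one.1 hYl
  have hi0 : i = 0 := by
    have := congrArg FreeMonoid.toList h
    rw [hc, hd, map_mul f, hi] at this
    simp only [one_mul, mul_one, x, FreeMonoid.toList_of_mul] at this
    exact (List.cons.inj this).1
  subst hi0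
  have hj1 : j = 1 := by
    have := congrArg (cnt 1) h
    rw [hc, hd, one_mul, mul_one, cnt_map 1 hp, hp0, hp1, hq1, hi, hj] at this
    by_contra hj1
    simp [hj1] at this
    omega
  subst hj1
  exact ⟨hc, hd, hi, hj⟩

/-- A nontrivial balanced identity `u = v` of a modular variety yields an identity that implies
commutativity in groups. -/
lemma ConModular.balanced {θ : FICon} (hm : ConModular θ) {u v : F} (hu : u ∈ xyWords)
    (hv : v ∈ xyWords) (h0 : cnt 0 u = cnt 0 v) (h1 : cnt 1 u = cnt 1 v) (hne : u ≠ v)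
    (h : θ.1 u v) : ∃ w : F, θ.1 (w * (x * y)) (w * (y * x)) := by
  -- `g` makes the two letters equally frequent
  set g : F := x ^ cnt 1 u * y ^ (cnt 0 u + 1) with hg
  have gmem : g ∈ xyWords := mul_mem (pow_mem x_mem _) (pow_mem y_mem _)
  set m := cnt 0 u + cnt 1 u + 2 with hmdef
  -- the four words `x·w·g·xy` and `x·w·g·yx` with `w = u, v`
  let P : F → F → F := fun w e => x * (w * g * e)
  have Pmem : ∀ {w e}, w ∈ xyWords → e = x * y ∨ e = y * x → P w e ∈ xyWords := by
    rintro w e hw (rfl | rfl)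
    · exact mul_mem x_mem (mul_mem (mul_mem hw gmem) (mul_mem x_mem y_mem))
    · exact mul_mem x_mem (mul_mem (mul_mem hw gmem) (mul_mem y_mem x_mem))
  have P0 : ∀ {w e}, w = u ∨ w = v → e = x * y ∨ e = y * x → cnt 0 (P w e) = m := by
    rintro w e (rfl | rfl) (rfl | rfl) <;> simp [P, hg, x, y] <;> omega
  have P1 : ∀ {w e}, w = u ∨ w = v → e = x * y ∨ e = y * x → cnt 1 (P w e) = m := by
    rintro w e (rfl | rfl) (rfl | rfl) <;> simp [P, hg, x, y] <;> omega
  have uv : ∀ {w}, w = u ∨ w = v → w ∈ xyWords := by rintro w (rfl | rfl) <;> assumption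
  have exy : (x * y : F) ≠ y * x := by
    intro he
    have := congrArg FreeMonoid.toList he
    simp [x, y] at this
  have erase : ∀ (f : F →* F) {w w' e e'}, w = u ∨ w = v → w' = u ∨ w' = v →
      e = x * y ∨ e = y * x → e' = x * y ∨ e' = y * x → f x = 1 ∨ f y = 1 →
      f (P w e) = f (P w' e') := by
    intro f w w' e e' hw hw' he he' hf
    rcases hf with hf | hf
    · rw [map_of_x_one hf (Pmem (uv hw) he), map_of_x_one hf (Pmem (uv hw') he'), P1 hw he,
        P1 hw' he']
    · rw [map_of_y_one hf (Pmem (uv hw) he), map_of_y_one hf (Pmem (uv hw') he'), P0 hw he,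
        P0 hw' he']
  have rigid : ∀ (f : F →* F) (c d : F) {w w' e e'}, w = u ∨ w = v → w' = u ∨ w' = v →
      e = x * y ∨ e = y * x → e' = x * y ∨ e' = y * x → ¬ (f x = 1 ∨ f y = 1) →
      c * f (P w e) * d = P w' e' → c = 1 ∧ d = 1 ∧ f x = x ∧ f y = y := by
    intro f c d w w' e e' hw hw' he he' hf heq
    push Not at hf
    exact rigid_xy (m := m) (by omega) (Pmem (uv hw) he) (Pmem (uv hw') he') (P0 hw he)
      (P1 hw he) (P0 hw' he') (P1 hw' he') hf.1 hf.2 heq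
  have main : θ.1 (P u (x * y)) (P u (y * x)) := by
    refine hm.rel (p₂ := P v (x * y)) (p₄ := P v (y * x)) ?_ ?_ ?_ ?_ ?_
    · exact θ.1.mul (θ.1.refl _) (θ.1.mul (θ.1.mul h (θ.1.refl _)) (θ.1.refl _))
    · exact θ.1.mul (θ.1.refl _) (θ.1.mul (θ.1.mul h (θ.1.refl _)) (θ.1.refl _))
    · intro he
      exact exy (mul_left_cancel (mul_left_cancel he)).symm
    · intro f c d
      by_cases hf : f x = 1 ∨ f y = 1
      · rw [erase f (w := u) (w' := u) (e := x * y) (e' := y * x) (by simp) (by simp) (by simp)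
          (by simp) hf]
      · have fwd : ∀ e e', e = x * y ∨ e = y * x → e' = x * y ∨ e' = y * x →
            c * f (P u e) * d = P u e' → ∀ e'', e'' = x * y ∨ e'' = y * x →
            c * f (P u e'') * d = P u e'' := by
          intro e e' he he' heq e'' he''
          obtain ⟨rfl, rfl, hx, hy⟩ :=
            rigid f c d (Or.inl rfl) (Or.inl rfl) he he' hf heq
          rw [map_of_id hx hy (Pmem hu he''), one_mul, mul_one]
        constructor
        · rintro (he | he)
          · exact Or.inr (fwd _ _ (by simp) (by simp) he _ (by simp))
          · exact Or.inr (fwd _ _ (by simp) (by simp) he _ (by simp))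
        · rintro (he | he)
          · exact Or.inl (fwd _ _ (by simp) (by simp) he _ (by simp))
          · exact Or.inl (fwd _ _ (by simp) (by simp) he _ (by simp))
    · intro f
      by_cases hf : f x = 1 ∨ f y = 1
      · exact Or.inl (erase f (by simp) (by simp) (by simp) (by simp) hf)
      · right
        -- a non-erasing instance would identify an `u`-word with a `v`-word
        have no : ∀ c d e e', e = x * y ∨ e = y * x → e' = x * y ∨ e' = y * x →
            c * f (P v e) * d ≠ P u e' := by
          intro c d e e' he he' heq
          obtain ⟨rfl, rfl, hx, hy⟩ :=
            rigid f c d (Or.inr rfl) (Or.inl rfl) he he' hf heq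
          rw [map_of_id hx hy (Pmem hv he), one_mul, mul_one] at heq
          have h3 : v * g * e = u * g * e' := mul_left_cancel heq
          have h4 := congrArg FreeMonoid.toList h3
          simp only [FreeMonoid.toList_mul, List.append_assoc] at h4
          refine hne (FreeMonoid.toList.injective (List.append_inj_left h4 ?_).symm)
          have hlen : ∀ w ∈ xyWords, (FreeMonoid.toList w).length = cnt 0 w + cnt 1 w := by
            intro w hw
            have := length_map (f := MonoidHom.id F) hw
            simp only [MonoidHom.id_apply, x, y, FreeMonoid.length_of, mul_one] at this
            exact this
          rw [hlen v hv, hlen u hu, h0, h1]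
        intro c d
        exact ⟨not_or.2 ⟨no c d _ _ (by simp) (by simp), no c d _ _ (by simp) (by simp)⟩,
          not_or.2 ⟨no c d _ _ (by simp) (by simp), no c d _ _ (by simp) (by simp)⟩⟩
  refine ⟨x * (u * g), ?_⟩
  simpa only [P, mul_assoc] using main

/-! ### Commutative theories -/

/-- The word `p` has no nonempty factor of the form `ww`. -/
def SqFree (p : F) : Prop := ∀ c w d : F, c * (w * w) * d = p → w = 1

/-- Boolean test for being a square `ww` of a nonempty list followed by anything. -/
def sqPrefix (l : List ℕ) : Bool :=
  (List.range l.length).any fun n => l.take (n + 1) == (l.drop (n + 1)).take (n + 1)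

/-- Boolean test for having a nonempty square factor. -/
def hasSq (l : List ℕ) : Bool := l.tails.any sqPrefix

lemma sqFree_of_hasSq {p : F} (h : hasSq (FreeMonoid.toList p) = false) : SqFree p := by
  intro c w d he
  by_contra hw
  have hl := congrArg FreeMonoid.toList he
  simp only [FreeMonoid.toList_mul] at hl
  have hwl : 1 ≤ (FreeMonoid.toList w).length := length_ne_zero hw
  set W := FreeMonoid.toList w
  set D := FreeMonoid.toList d
  have h1 : sqPrefix (W ++ W ++ D) = true := by
    refine List.any_eq_true.2 ⟨W.length - 1, ?_, ?_⟩
    · simp only [List.mem_range, List.length_append]; omega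
    · rw [Nat.sub_add_cancel hwl, List.append_assoc]
      simp
  have h2 : hasSq (FreeMonoid.toList p) = true := by
    refine List.any_eq_true.2 ⟨W ++ W ++ D, ?_, h1⟩
    rw [List.mem_tails, ← hl]
    exact ⟨FreeMonoid.toList c, by simp [List.append_assoc]⟩
  rw [h] at h2
  exact absurd h2 (by decide)

/-- A square-free word with `x`, `y`, `z` occurring `2`, `3`, `2` times. -/
def wA : F := x*y*z*y*x*z*y

/-- A square-free word with `x`, `y`, `z` occurring `3`, `2`, `2` times. -/
def wB : F := x*y*z*x*z*y*x

lemma sqFree_wA : SqFree wA := sqFree_of_hasSq (by decide)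
lemma sqFree_wB : SqFree wB := sqFree_of_hasSq (by decide)

lemma SqFree.factor {p c q d : F} (hp : SqFree p) (h : c * q * d = p) : SqFree q :=
  fun c' w d' he => hp (c * c') w (d' * d) (by rw [← h, ← he]; simp only [mul_assoc])

lemma SqFree.eq_one {p w : F} (hp : SqFree p) (c d : F) (h : p = c * (w * w) * d) : w = 1 :=
  hp c w d h.symm

/-- Erasing a letter of `wA` creates a square. -/
lemma erase_wA {f : F →* F} (hs : SqFree (f wA)) (h : f x = 1 ∨ f y = 1 ∨ f z = 1) :
    f x = 1 ∧ f y = 1 ∧ f z = 1 := by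
  simp only [wA, map_mul] at hs
  have split : ∀ {u v : F}, u * v = 1 → u = 1 ∧ v = 1 := fun {u v} huv => by
    have := congrArg FreeMonoid.length huv
    rw [FreeMonoid.length_mul, FreeMonoid.length_one] at this
    exact ⟨FreeMonoid.length_eq_zero.1 (by omega), FreeMonoid.length_eq_zero.1 (by omega)⟩
  rcases h with h | h | h
  · have := split (hs.eq_one (w := f y * f z) 1 (f y) (by rw [h]; simp only [mul_assoc, one_mul]))
    exact ⟨h, this⟩
  · have := split (hs.eq_one (w := f x * f z) 1 1
      (by rw [h]; simp only [mul_assoc, one_mul, mul_one]))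
    exact ⟨this.1, h, this.2⟩
  · have hy := hs.eq_one (w := f y) (f x) (f x * f y)
      (by rw [h]; simp only [mul_assoc, one_mul])
    have hx := hs.eq_one (w := f x) 1 1
      (by rw [h, hy]; simp only [one_mul, mul_one])
    exact ⟨hx, hy, h⟩

/-- Erasing a letter of `wB` creates a square. -/
lemma erase_wB {f : F →* F} (hs : SqFree (f wB)) (h : f x = 1 ∨ f y = 1 ∨ f z = 1) :
    f x = 1 ∧ f y = 1 ∧ f z = 1 := by
  simp only [wB, map_mul] at hs
  have split : ∀ {u v : F}, u * v = 1 → u = 1 ∧ v = 1 := fun {u v} huv => by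
    have := congrArg FreeMonoid.length huv
    rw [FreeMonoid.length_mul, FreeMonoid.length_one] at this
    exact ⟨FreeMonoid.length_eq_zero.1 (by omega), FreeMonoid.length_eq_zero.1 (by omega)⟩
  rcases h with h | h | h
  · have hz := hs.eq_one (w := f z) (f y) (f y)
      (by rw [h]; simp only [mul_assoc, one_mul, mul_one])
    have hy := hs.eq_one (w := f y) 1 1
      (by rw [h, hz]; simp only [one_mul, mul_one])
    exact ⟨h, hy, hz⟩
  · have := split (hs.eq_one (w := f x * f z) 1 (f x)
      (by rw [h]; simp only [mul_assoc, one_mul, mul_one]))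
    exact ⟨this.1, h, this.2⟩
  · have := split (hs.eq_one (w := f x * f y) 1 (f x)
      (by rw [h]; simp only [mul_assoc, one_mul, mul_one]))
    exact ⟨this.1, this.2, h⟩

/-- Both words have length `7` and the prefix `xyz`, so an instance of one in the other under a
non-erasing substitution is trivial. -/
lemma rigid_wAB {f : F →* F} {c d p q : F} (hp : p = wA ∨ p = wB) (hq : q = wA ∨ q = wB)
    (hX : f x ≠ 1) (hY : f y ≠ 1) (hZ : f z ≠ 1) (h : c * f p * d = q) :
    c = 1 ∧ d = 1 ∧ f wA = wA ∧ f wB = wB := by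
  have hX' := length_ne_zero hX
  have hY' := length_ne_zero hY
  have hZ' := length_ne_zero hZ
  have hql : q.length = 7 := by rcases hq with rfl | rfl <;> rfl
  have hl := congrArg FreeMonoid.length h
  rw [hql, FreeMonoid.length_mul, FreeMonoid.length_mul] at hl
  have hlen : c.length = 0 ∧ d.length = 0 ∧ (f x).length = 1 ∧ (f y).length = 1 ∧
      (f z).length = 1 := by
    rcases hp with rfl | rfl <;> simp only [wA, wB, map_mul, FreeMonoid.length_mul] at hl <;>
      refine ⟨?_, ?_, ?_, ?_, ?_⟩ <;> omega
  obtain ⟨hc, hd, hx, hy, hz⟩ := hlen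
  rw [FreeMonoid.length_eq_zero] at hc hd
  obtain ⟨i, hi⟩ := FreeMonoid.length_eq_one.1 hx
  obtain ⟨j, hj⟩ := FreeMonoid.length_eq_one.1 hy
  obtain ⟨k, hk⟩ := FreeMonoid.length_eq_one.1 hz
  have hijk : i = 0 ∧ j = 1 ∧ k = 2 := by
    subst hc hd
    rcases hp with rfl | rfl <;> rcases hq with rfl | rfl <;>
    · have h' := congrArg FreeMonoid.toList h
      simp only [wA, wB, map_mul f, hi, hj, hk, one_mul, mul_one] at h'
      simp [x, y, z] at h'
      omega
  obtain ⟨rfl, rfl, rfl⟩ := hijk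
  refine ⟨hc, hd, ?_, ?_⟩
  · simp only [wA, map_mul, hi, hj, hk]; rfl
  · simp only [wB, map_mul, hi, hj, hk]; rfl

/-- A commutative modular variety satisfies `x² = x³`. -/
lemma ConModular.cube {θ : FICon} (hm : ConModular θ) (hc : θ.1 (x * y) (y * x)) :
    θ.1 (x * x) (x * x * x) := by
  have key : θ.1 wA wB := by
    refine hm.rel (p₂ := (x*x)*(y*y)*(z*z)*y) (p₄ := (x*x)*(y*y)*(z*z)*x) ?_ ?_ ?_ ?_ ?_
    · refine rel_of_cnt hc fun a => ?_
      have : cnt a wA = cnt a ((x*x)*(y*y)*(z*z)*y) := by simp only [wA, cnt_mul]; ring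
      rw [this]
      exact θ.1.refl _
    · refine rel_of_cnt hc fun a => ?_
      have : cnt a wB = cnt a ((x*x)*(y*y)*(z*z)*x) := by simp only [wB, cnt_mul]; ring
      rw [this]
      exact θ.1.refl _
    · intro he
      have := congrArg (cnt 0) he
      simp [wA, wB, x, y, z] at this
    · intro f c d
      have sq : ∀ {p : F}, (c * f p * d = wA ∨ c * f p * d = wB) → SqFree (f p) := by
        rintro p (he | he)
        · exact sqFree_wA.factor he
        · exact sqFree_wB.factor he
      by_cases hf : f x = 1 ∨ f y = 1 ∨ f z = 1
      · by_cases h1 : f x = 1 ∧ f y = 1 ∧ f z = 1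
        · simp only [wA, wB, map_mul, h1]
        · exact iff_of_false (fun he => h1 (erase_wA (sq he) hf))
            (fun he => h1 (erase_wB (sq he) hf))
      · push Not at hf
        constructor
        · rintro (he | he) <;>
          · obtain ⟨rfl, rfl, -, h2⟩ :=
              rigid_wAB (by simp) (by simp) hf.1 hf.2.1 hf.2.2 he
            right; rw [h2, one_mul, mul_one]
        · rintro (he | he) <;>
          · obtain ⟨rfl, rfl, h2, -⟩ :=
              rigid_wAB (by simp) (by simp) hf.1 hf.2.1 hf.2.2 he
            left; rw [h2, one_mul, mul_one]
    · intro f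
      by_cases h1 : f x = 1 ∧ f y = 1 ∧ f z = 1
      · left; simp only [map_mul, h1]
      · right
        have no : ∀ e : F, ¬ SqFree (f ((x*x)*(y*y)*(z*z)*e)) := by
          intro e hs
          simp only [map_mul] at hs
          refine h1 ⟨hs.eq_one 1 (f y * f y * (f z * f z) * f e) ?_,
            hs.eq_one (f x * f x) (f z * f z * f e) ?_,
            hs.eq_one (f x * f x * (f y * f y)) (f e) ?_⟩ <;> simp only [mul_assoc, one_mul]
        intro c d
        refine ⟨?_, ?_⟩ <;> rintro (he | he)
        · exact no _ (sqFree_wA.factor he)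
        · exact no _ (sqFree_wB.factor he)
        · exact no _ (sqFree_wA.factor he)
        · exact no _ (sqFree_wB.factor he)
  have := only_rel key 0 x
  simpa [wA, wB, x, y, z, pow_succ] using this

/-! ### Upper-modularity -/

lemma perm_pair {w : F} (h : ∀ a, cnt a w = cnt a (x * y)) : w = x * y ∨ w = y * x := by
  have hp : (FreeMonoid.toList w).Perm [0, 1] := List.perm_iff_count.2 fun a => h a
  have hlen : w.length = 2 := hp.length_eq
  obtain ⟨a, b, rfl⟩ := FreeMonoid.length_eq_two.1 hlen
  have h0 := h 0
  have h1 := h 1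
  simp [x, y] at h0 h1
  by_cases ha : a = 0
  · subst ha
    have hb : b = 1 := by by_contra hb; simp [hb] at h1
    subst hb
    exact Or.inl rfl
  · have hb : b = 0 := by by_contra hb; simp [ha, hb] at h0
    subst hb
    have ha1 : a = 1 := by by_contra ha1; simp [ha1] at h1
    subst ha1
    exact Or.inr rfl

lemma cnt_of_not_cr {θ : FICon} (hcr : ¬ ∃ n, 2 ≤ n ∧ θ.1 x (x ^ n)) {p w : F}
    (hp : ∀ a, cnt a p ≤ 1) (h : θ.1 p w) (a : ℕ) : cnt a p = cnt a w := by
  have hr := only_rel h a x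
  have key := hp a
  generalize cnt a p = i at hr key
  generalize cnt a w = j at hr
  by_contra hij
  refine hcr ?_
  interval_cases i
  · exact ⟨j + 1, by omega, x_of_pow (by simpa using θ.1.symm hr)⟩
  · rcases Nat.eq_zero_or_pos j with rfl | hj
    · exact ⟨1 + 1, le_rfl, x_of_pow (by simpa using hr)⟩
    · exact ⟨j, by omega, by simpa using hr⟩

lemma cnt_xy_le (a : ℕ) : cnt a (x * y) ≤ 1 := by
  simp [x, y]; split_ifs <;> omega

/-- In a theory that is neither completely regular nor commutative, `xy` is an isoterm. -/
lemma xy_isolated {θ : FICon} (hcr : ¬ ∃ n, 2 ≤ n ∧ θ.1 x (x ^ n)) (hc : ¬ θ.1 (x * y) (y * x))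
    {w : F} (h : θ.1 (x * y) w) : w = x * y := by
  rcases perm_pair fun a => (cnt_of_not_cr hcr cnt_xy_le h a).symm with rfl | rfl
  · rfl
  · exact absurd h hc

/-- The theory of the symmetric group of degree three. -/
def s3 : FICon := thy (Equiv.Perm (Fin 3))

lemma s3_not_comm : ¬ s3.1 (x * y) (y * x) := by
  intro h
  have := h (FreeMonoid.lift fun a => if a = 0 then Equiv.swap 0 1 else Equiv.swap 1 2)
  simp only [map_mul, x, y, FreeMonoid.lift_eval_of] at this
  revert this
  decide

lemma s3_pow : s3.1 (x ^ 6) 1 := by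
  intro f
  rw [map_pow, map_one]
  have := pow_card_eq_one (x := f x)
  rwa [show Fintype.card (Equiv.Perm (Fin 3)) = 6 by rfl] at this

/-- An upper-modular variety that is not completely regular and meets the variety generated by
`S₃` in a commutative variety is commutative. Otherwise, with `α` the largest theory saturating
`{xy, yx}`, the word `xy` is isolated in `θ` and in `α ⊓ s3`, hence in their join, which by
upper-modularity is `α ⊓ (θ ⊔ s3)` and relates `xy` to `yx`. -/
lemma ConUpper.comm {θ : FICon} (hu : ConUpper θ) (hcr : ¬ ∃ n, 2 ≤ n ∧ θ.1 x (x ^ n))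
    (h : (θ ⊔ s3).1 (x * y) (y * x)) : θ.1 (x * y) (y * x) := by
  by_contra hc
  let K : F → Prop := fun w => ∀ a, cnt a w = cnt a (x * y)
  have hle : θ ≤ synt K := le_synt fun u v huv hK a => by
    rw [← hK a]
    exact (cnt_of_not_cr hcr (fun b => (hK b).trans_le (cnt_xy_le b)) huv a).symm
  have hα : (synt K).1 (x * y) (y * x) := by
    intro f c d
    refine forall_congr' fun a => ?_
    simp only [map_mul, cnt_mul]
    omega
  have hmem : (θ ⊔ (synt K ⊓ s3)).1 (x * y) (y * x) := by
    rw [hu (synt K) s3 hle]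
    exact inf_apply.2 ⟨hα, h⟩
  have heq : y * x = x * y := by
    refine sup_isolated (fun w => xy_isolated hcr hc) (fun w hw => ?_) hmem
    obtain ⟨h1, h2⟩ := inf_apply.1 hw
    rcases perm_pair ((synt_iff h1).1 fun _ => rfl) with rfl | rfl
    · rfl
    · exact absurd h2 s3_not_comm
  have := congrArg FreeMonoid.toList heq
  simp [x, y] at this

/-! ### Commutativity -/

/-- The embedding of `F` into the words over `x`, `y` that sends the `n`-th letter to `xⁿy`. -/
def code : F →* F := FreeMonoid.lift fun n => x ^ n * y

lemma code_of (n : ℕ) : code (of n) = x ^ n * y := by simp [code]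

lemma code_mem (w : F) : code w ∈ xyWords := by
  induction w using FreeMonoid.inductionOn' with
  | one => simp
  | of_mul b w ih =>
    rw [map_mul, code_of]
    exact mul_mem (mul_mem (pow_mem x_mem b) y_mem) ih

lemma toList_block (n : ℕ) (w : F) :
    FreeMonoid.toList (x ^ n * y * w) = List.replicate n 0 ++ 1 :: FreeMonoid.toList w := by
  induction n with
  | zero => simp [y]
  | succ n ih =>
    rw [pow_succ', mul_assoc, mul_assoc, FreeMonoid.toList_mul, ← mul_assoc, ih]
    simp [x, List.replicate_succ]

lemma replicate_block_inj {n m : ℕ} {A B : List ℕ}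
    (h : List.replicate n 0 ++ 1 :: A = List.replicate m 0 ++ 1 :: B) : n = m ∧ A = B := by
  induction n generalizing m with
  | zero => cases m <;> simp_all [List.replicate_succ]
  | succ n ih =>
    cases m with
    | zero => simp [List.replicate_succ] at h
    | succ m =>
      simp only [List.replicate_succ, List.cons_append, List.cons.injEq, true_and] at h
      obtain ⟨rfl, h2⟩ := ih h
      exact ⟨rfl, h2⟩

lemma code_injective : Function.Injective code := by
  intro u
  induction u using FreeMonoid.inductionOn' with
  | one =>
    intro v h
    cases v using FreeMonoid.casesOn with
    | one => rfl
    | of_mul b v =>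
      have := congrArg FreeMonoid.toList h
      rw [map_mul code, code_of, toList_block] at this
      simp at this
  | of_mul a u ih =>
    intro v h
    cases v using FreeMonoid.casesOn with
    | one =>
      have := congrArg FreeMonoid.toList h
      rw [map_mul code, code_of, toList_block] at this
      simp at this
    | of_mul b v =>
      have := congrArg FreeMonoid.toList h
      rw [map_mul code, map_mul code, code_of, code_of, toList_block, toList_block] at this
      obtain ⟨rfl, h2⟩ := replicate_block_inj this
      rw [ih (FreeMonoid.toList.injective h2)]

/-- Modulo the identity `x⁶ = 1` of `S₃`, centrality of a power of `x` with exponent `6i + 1`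
is commutativity. -/
lemma ConModular.comm_of_pow {θ : FICon} (hm : ConModular θ) {i j : ℕ} (hij : i < j)
    (h : θ.1 (x ^ i) (x ^ j)) : (θ ⊔ s3).1 (x * y) (y * x) := by
  have h1 : θ.1 (x ^ (6 * i + 1)) (x ^ (6 * i + 1 + (j - i))) := by
    have := θ.1.mul (θ.1.refl (x ^ (5 * i + 1))) h
    rwa [← pow_add, ← pow_add, show 5 * i + 1 + i = 6 * i + 1 by omega,
      show 5 * i + 1 + j = 6 * i + 1 + (j - i) by omega] at this
  have h2 := hm.central (by omega) (by omega) h1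
  have h3 : s3.1 x (x ^ (6 * i + 1)) := by
    have := s3.1.pow i s3_pow
    rw [← pow_mul, one_pow] at this
    exact x_of_pow this
  have h4 : (θ ⊔ s3).1 x (x ^ (6 * i + 1)) := sup_of_right h3
  refine Con.trans _ (Con.mul _ h4 (Con.refl _ y)) (Con.trans _ (sup_of_left h2) ?_)
  exact Con.symm _ (Con.mul _ (Con.refl _ y) h4)

/-- A modular and upper-modular variety other than the variety of all monoids is commutative. -/
lemma comm_of_modular {θ : FICon} (hm : ConModular θ) (hu : ConUpper θ) {u v : F} (hne : u ≠ v)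
    (h : θ.1 u v) : θ.1 (x * y) (y * x) := by
  by_cases hcr : ∃ n, 2 ≤ n ∧ θ.1 x (x ^ n)
  · obtain ⟨n, hn, hx⟩ := hcr
    simpa using hm.central (a := 1) le_rfl hn (by simpa using hx)
  refine hu.comm hcr ?_
  have hg := θ.2 code u v h
  have unbalanced : ∀ a, cnt a (code u) ≠ cnt a (code v) → (θ ⊔ s3).1 (x * y) (y * x) := by
    intro a ha
    have hr := only_rel hg a x
    rcases lt_or_gt_of_ne ha with hl | hl
    · exact hm.comm_of_pow hl hr
    · exact hm.comm_of_pow hl (θ.1.symm hr)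
  by_cases h0 : cnt 0 (code u) = cnt 0 (code v)
  · by_cases h1 : cnt 1 (code u) = cnt 1 (code v)
    · obtain ⟨w, hw⟩ := hm.balanced (code_mem u) (code_mem v) h0 h1
        (fun he => hne (code_injective he)) hg
      have hw5 := θ.1.mul (θ.1.refl (w ^ 5)) hw
      rw [← mul_assoc _ w, ← mul_assoc _ w, ← pow_succ] at hw5
      refine Con.trans _ (sup_of_right (mul_pow_one s3_pow (x * y) w))
        (Con.trans _ (sup_of_left hw5) ?_)
      exact sup_of_right (s3.1.symm (mul_pow_one s3_pow (y * x) w))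
    · exact unbalanced 1 h1
  · exact unbalanced 0 h0

/-! ### The classification -/

lemma rel_all {θ : FICon} (h : θ.1 x 1) (w : F) : θ.1 w 1 := by
  simpa using subst_x (i := 1) (j := 0) (by simpa using h) w

lemma classify {θ : FICon} (hm : ConModular θ) (hu : ConUpper θ) :
    θ = ⊤ ∨ θ = slc ∨ θ = c2c ∨ θ = ⊥ := by
  by_cases ht : ∀ u v, θ.1 u v → u = v
  · refine .inr <| .inr <| .inr <| le_bot_iff.1 (ficon_le_iff.2 fun u v h => ?_)
    rw [ht u v h]
    exact Con.refl _ _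
  push Not at ht
  obtain ⟨u, v, h, hne⟩ := ht
  have hc := comm_of_modular hm hu hne h
  have h3 := hm.cube hc
  by_cases h2 : θ ≤ c2c
  · refine .inr <| .inr <| .inl <| le_antisymm h2 (fic_le ?_)
    rintro p (rfl | rfl)
    exacts [h3, hc]
  obtain ⟨n, hn, hx⟩ := exists_pow_x h2
  have hsq : θ.1 (x * x) x := by
    rw [← sq]
    exact θ.1.trans (pow_of_cube h3 hn) (θ.1.symm hx)
  by_cases h1 : θ ≤ slc
  · refine .inr <| .inl <| le_antisymm h1 (fic_le ?_)
    rintro p (rfl | rfl)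
    exacts [hsq, hc]
  obtain ⟨m, hm1, hx1⟩ := exists_pow_one h1
  have hx : θ.1 x 1 := θ.1.trans (pow_of_sq hsq hm1) hx1
  exact .inl <| top_le_iff.1 (ficon_le_iff.2 fun u v _ =>
    θ.1.trans (rel_all hx u) (θ.1.symm (rel_all hx v)))

end MonoidVarieties

open MonoidVarieties

theorem statement1 (V : MON) :
    [IsModularElt V ∧ IsUpperModularElt V,
     IsCostandardElt V,
     V = ⊥ ∨ V = SLv ∨ V = C2v ∨ V = ⊤].TFAE := by
  tfae_have 1 → 3 := fun hV => by
    have hm : ConModular (OrderDual.ofDual V) := fun α β h =>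
      hV.1 (OrderDual.toDual α) (OrderDual.toDual β) h
    have hu : ConUpper (OrderDual.ofDual V) := fun α β h =>
      hV.2 (OrderDual.toDual α) (OrderDual.toDual β) h
    exact classify hm hu
  tfae_have 3 → 2 := by
    rintro (rfl | rfl | rfl | rfl)
    · intro a b; simp
    · exact costandard_of_std slc_std
    · exact costandard_of_std c2c_std
    · intro a b; simp
  tfae_have 2 → 1 := modular_upper_of_costandard
  tfae_finish
end

section
/- If V is an element of the lattice MON of monoid varieties with V ≠ ⊤ (i.e., V is a proper variety) and V is an upper-modular element of MON, then V is commutative (that is, (xy, yx) ∈ θ_V) or V is completely regular (that is, there exists n ≥ 1 with (x, x^{n+1}) ∈ θ_V). -/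
open Polynomial

/-! ### The lattice of varieties -/

lemma theta_isFullyInvariant (V : MON) : IsFullyInvariant (theta V) :=
  (OrderDual.ofDual V).2

lemma mon_le_iff (V W : MON) : V ≤ W ↔ ∀ u v, theta W u v → theta V u v :=
  ⟨fun h _ _ huv => h huv, fun h _ _ huv => h _ _ huv⟩

lemma theta_sup (A B : MON) (u v : F) :
    theta (A ⊔ B) u v ↔ theta A u v ∧ theta B u v := by
  constructor
  · exact fun h => ⟨(mon_le_iff _ _).1 le_sup_left u v h, (mon_le_iff _ _).1 le_sup_right u v h⟩
  · intro h
    let I : MON := OrderDual.toDual ⟨theta A ⊓ theta B, fun f u v huv =>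
      ⟨theta_isFullyInvariant A f u v huv.1, theta_isFullyInvariant B f u v huv.2⟩⟩
    have hI : A ⊔ B ≤ I :=
      sup_le ((mon_le_iff _ _).2 fun _ _ h => h.1) ((mon_le_iff _ _).2 fun _ _ h => h.2)
    exact (mon_le_iff _ _).1 hI u v h

/-- The variety of the largest fully invariant congruence saturating the set `S` of words:
`u` and `v` are related when no substitution followed by multiplication on both sides separates
them with respect to membership in `S`. -/
def syntVar (S : Set F) : MON :=
  OrderDual.toDual
    ⟨{ r := fun u v => ∀ (f : F →* F) (p q : F), p * f u * q ∈ S ↔ p * f v * q ∈ S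
       iseqv := ⟨fun _ _ _ _ => Iff.rfl, fun h f p q => (h f p q).symm,
         fun h h' f p q => (h f p q).trans (h' f p q)⟩
       mul' := by
         intro a b c d h h' f p q
         have h1 := h f p (f c * q)
         have h2 := h' f (p * f b) q
         simp only [map_mul, mul_assoc] at h1 h2 ⊢
         exact h1.trans h2 },
     fun g _ _ h f p q => h (f.comp g) p q⟩

lemma syntVar_le (S : Set F) (V : MON)
    (h : ∀ u v, theta V u v → u ∈ S → v ∈ S) : syntVar S ≤ V := by
  rw [mon_le_iff]
  intro u v huv f p q
  have h1 : theta V (p * f u * q) (p * f v * q) :=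
    (theta V).mul ((theta V).mul ((theta V).refl p) (theta_isFullyInvariant V f u v huv))
      ((theta V).refl q)
  exact ⟨h _ _ h1, h _ _ ((theta V).symm h1)⟩

/-- The variety generated by a monoid `G`: its equational theory consists of the pairs identified
by every homomorphism to `G`. -/
def varOf (G : Type) [Monoid G] : MON :=
  OrderDual.toDual
    ⟨{ r := fun u v => ∀ φ : F →* G, φ u = φ v
       iseqv := ⟨fun _ _ => rfl, fun h φ => (h φ).symm, fun h h' φ => (h φ).trans (h' φ)⟩
       mul' := by
         intro a b c d h h' φ
         rw [map_mul, map_mul, h, h'] },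
     fun g _ _ h φ => h (φ.comp g)⟩

/-! ### Words equivalent to `xy` -/

/-- The substitution sending the letter `a` to `x` and erasing all other letters. -/
def keepLetter (a : ℕ) : F →* F := FreeMonoid.lift fun i => if i = a then x else 1

lemma keepLetter_apply (a : ℕ) (w : F) :
    keepLetter a w = x ^ (FreeMonoid.toList w).count a := by
  induction w using FreeMonoid.inductionOn' with
  | one => simp
  | of_mul i w ih =>
    rw [map_mul, ih, FreeMonoid.toList_of_mul, List.count_cons]
    by_cases h : i = a
    · simp [keepLetter, h, pow_succ']
    · simp [keepLetter, h]

/-- The words `xy` and `yx`. -/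
def pairWords : Set F := {w | (FreeMonoid.toList w).Perm [0, 1]}

lemma mem_pairWords (w : F) : w ∈ pairWords ↔ w = x * y ∨ w = y * x := by
  constructor
  · intro h
    have h : (FreeMonoid.toList w).Perm [0, 1] := h
    rw [← List.mem_permutations] at h
    have h2 : FreeMonoid.toList w = [0, 1] ∨ FreeMonoid.toList w = [1, 0] := by
      simpa [List.permutations, List.permutationsAux, List.permutationsAux.rec,
        List.permutationsAux2] using h
    exact h2.imp (fun e => FreeMonoid.toList.injective e) (fun e => FreeMonoid.toList.injective e)
  · rintro (rfl | rfl)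
    · exact List.Perm.refl [0, 1]
    · exact List.Perm.swap 0 1 []

/-- If `V` is not completely regular, an identity of `V` preserves being `xy` up to order:
erasing all letters but one would otherwise give some `x ≈ x ^ (n + 1)` with `n ≥ 1`. -/
lemma perm_of_theta (V : MON) (hcr : ¬ ∃ n : ℕ, 1 ≤ n ∧ theta V x (x ^ (n + 1)))
    (w w' : F) (h : theta V w w') (hw : w ∈ pairWords) : w' ∈ pairWords := by
  have key : ∀ k, theta V x (x ^ k) → k = 1 := by
    intro k hk
    by_contra hne
    apply hcr
    rcases Nat.lt_or_ge k 1 with h0 | h1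
    · obtain rfl : k = 0 := by omega
      rw [pow_zero] at hk
      refine ⟨1, le_rfl, (theta V).trans hk ?_⟩
      have := (theta V).symm ((theta V).pow 2 hk)
      rwa [one_pow] at this
    · refine ⟨k - 1, by omega, ?_⟩
      rwa [Nat.sub_add_cancel h1]
  have key' : ∀ k, theta V 1 (x ^ k) → k = 0 := by
    intro k hk
    have h1 := (theta V).mul hk ((theta V).refl x)
    rw [one_mul, ← pow_succ] at h1
    have := key _ h1
    omega
  have hw : (FreeMonoid.toList w).Perm [0, 1] := hw
  change (FreeMonoid.toList w').Perm [0, 1]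
  rw [List.perm_iff_count] at hw ⊢
  intro a
  have h1 := theta_isFullyInvariant V (keepLetter a) w w' h
  rw [keepLetter_apply, keepLetter_apply, hw a] at h1
  by_cases ha : a = 0
  · subst ha
    have := key _ (by simpa using h1)
    simpa using this
  by_cases hb : a = 1
  · subst hb
    have := key _ (by simpa using h1)
    simpa using this
  have hz : List.count a [0, 1] = 0 := by
    rw [List.count_eq_zero]
    simp [ha, hb]
  rw [hz] at h1 ⊢
  exact key' _ (by simpa using h1)

/-- A noncommutative variety that meets some noncommutative `Z` in a commutative variety is
completely regular or not upper-modular. -/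
lemma not_upperModular (V Z : MON) (hcomm : ¬ theta V (x * y) (y * x))
    (hcr : ¬ ∃ n : ℕ, 1 ≤ n ∧ theta V x (x ^ (n + 1)))
    (hZ : ¬ theta Z (x * y) (y * x)) (hVZ : theta (V ⊓ Z) (x * y) (y * x)) :
    ¬ IsUpperModularElt V := by
  intro hum
  have hYV : syntVar pairWords ≤ V := syntVar_le _ _ (perm_of_theta V hcr)
  have hY : theta (syntVar pairWords) (x * y) (y * x) := by
    intro f p q
    have hperm : (FreeMonoid.toList (p * f (x * y) * q)).Perm
        (FreeMonoid.toList (p * f (y * x) * q)) := by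
      simp only [map_mul, FreeMonoid.toList_mul]
      exact (List.perm_append_comm.append_left _).append_right _
    exact ⟨fun h => hperm.symm.trans h, fun h => hperm.trans h⟩
  have hle : syntVar {x * y} ≤ V ⊓ (syntVar pairWords ⊔ Z) := by
    apply le_inf
    · apply syntVar_le
      rintro u v huv rfl
      rcases (mem_pairWords v).1 (perm_of_theta V hcr _ v huv ((mem_pairWords _).2 (Or.inl rfl)))
        with rfl | rfl
      · rfl
      · exact absurd huv hcomm
    · apply syntVar_le
      rintro u v huv rfl
      rw [theta_sup] at huv
      have hv := (huv.1 (MonoidHom.id F) 1 1).1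
        (by simpa using (mem_pairWords (x * y)).2 (Or.inl rfl))
      rw [one_mul, mul_one] at hv
      rcases (mem_pairWords v).1 hv with h | h
      · exact h
      · subst h
        exact absurd huv.2 hZ
  rw [hum _ Z hYV, mon_le_iff] at hle
  have h1 := hle _ _ ((theta_sup _ _ _ _).2 ⟨hY, hVZ⟩)
  have h2 : y * x = x * y := by
    simpa using (h1 (MonoidHom.id F) 1 1).1 (by simp)
  have h3 := congrArg FreeMonoid.toList h2
  simp [x, y] at h3

/-! ### A nontrivial identity with sides of equal length -/

lemma exists_ne_of_ne_top (V : MON) (h : V ≠ ⊤) : ∃ u v, theta V u v ∧ u ≠ v := by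
  by_contra! hc
  apply h
  rw [eq_top_iff, mon_le_iff]
  intro u v huv
  rw [hc u v huv]
  exact (theta ⊤).refl v

lemma exists_eq_length (V : MON) (h : V ≠ ⊤) : ∃ u v : F, theta V u v ∧ u ≠ v ∧
    (FreeMonoid.toList u).length = (FreeMonoid.toList v).length := by
  obtain ⟨u, v, huv, hne⟩ := exists_ne_of_ne_top V h
  by_cases hl : (FreeMonoid.toList u).length = (FreeMonoid.toList v).length
  · exact ⟨u, v, huv, hne, hl⟩
  -- Identifying all letters gives `x ^ k ≈ x ^ l` with `k ≠ l`; then `x^k y x^l ≈ x^l y x^k`.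
  have hpow : ∀ w : F, FreeMonoid.lift (fun _ => x) w = x ^ (FreeMonoid.toList w).length := by
    intro w
    induction w using FreeMonoid.inductionOn' with
    | one => simp
    | of_mul i w ih => simp [ih, pow_succ']
  have h1 := theta_isFullyInvariant V (FreeMonoid.lift fun _ => x) u v huv
  rw [hpow, hpow] at h1
  have htl : ∀ k, FreeMonoid.toList (x ^ k) = List.replicate k 0 := by
    intro k
    induction k with
    | zero => rfl
    | succ k ih => rw [pow_succ', FreeMonoid.toList_mul, ih]; rfl
  have htw : ∀ k l, FreeMonoid.toList (x ^ k * y * x ^ l) =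
      List.replicate k 0 ++ 1 :: List.replicate l 0 := by
    intro k l
    simp [FreeMonoid.toList_mul, htl, y]
  refine ⟨x ^ _ * y * x ^ _, x ^ _ * y * x ^ _,
    (theta V).mul ((theta V).mul h1 ((theta V).refl y)) ((theta V).symm h1), ?_, ?_⟩
  · intro he
    apply hl
    have h2 := congrArg (fun w => (FreeMonoid.toList w).idxOf 1) he
    simpa [htw, List.idxOf_append] using h2
  · simp only [htw, List.length_append, List.length_cons, List.length_replicate]
    omega

/-! ### Position polynomials -/

/-- The polynomial `∑ T ^ (i + 1)` over the positions `i` of the letter `b` in a word. -/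
noncomputable def posPoly (b : ℕ) : List ℕ → (ZMod 2)[X]
  | [] => 0
  | i :: l => X * ((if i = b then 1 else 0) + posPoly b l)

lemma posPoly_coeff_zero (b : ℕ) (l : List ℕ) : (posPoly b l).coeff 0 = 0 := by
  cases l <;> simp [posPoly]

lemma eq_of_posPoly_eq (l l' : List ℕ) (hlen : l.length = l'.length)
    (h : ∀ b, posPoly b l = posPoly b l') : l = l' := by
  induction l generalizing l' with
  | nil => exact (List.length_eq_zero_iff.1 hlen.symm).symm
  | cons i l ih =>
    cases l' with
    | nil => simp at hlen
    | cons j l' =>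
      have h1 : ∀ b, (if i = b then (1 : (ZMod 2)[X]) else 0) + posPoly b l =
          (if j = b then 1 else 0) + posPoly b l' := fun b =>
        mul_left_cancel₀ X_ne_zero (h b)
      have hij : i = j := by
        by_contra hne
        have h2 := congrArg (fun p => coeff p 0) (h1 i)
        simp [posPoly_coeff_zero, Ne.symm hne] at h2
      subst hij
      rw [ih l' (by simpa using hlen) fun b => add_left_cancel (h1 b)]

/-- A nonzero polynomial over `ZMod 2` has no roots outside `{0, 1}` in the field of order `2 ^ m`
when `m` is a prime exceeding its degree, since these elements have degree `m`. -/
lemma aeval_ne_zero (f : (ZMod 2)[X]) (hf : f ≠ 0) (m : ℕ) (hm : m.Prime)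
    (hd : f.natDegree < m) (a : GaloisField 2 m) (h0 : a ≠ 0) (h1 : a ≠ 1) :
    aeval a f ≠ 0 := by
  intro hroot
  have hint : IsIntegral (ZMod 2) a := Algebra.IsIntegral.isIntegral a
  have hdeg : (minpoly (ZMod 2) a).natDegree ≤ f.natDegree :=
    natDegree_le_of_dvd (minpoly.dvd _ _ hroot) hf
  have hdvd : (minpoly (ZMod 2) a).natDegree ∣ m := by
    have := minpoly.degree_dvd (K := ZMod 2) hint
    rwa [GaloisField.finrank 2 hm.ne_zero] at this
  rcases (Nat.dvd_prime hm).1 hdvd with h | h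
  · obtain ⟨c, hc⟩ := minpoly.natDegree_eq_one_iff.1 h
    have hc2 : c = 0 ∨ c = 1 := by
      clear hc
      revert c
      decide
    rcases hc2 with rfl | rfl
    · exact h0 (by rw [← hc, map_zero])
    · exact h1 (by rw [← hc, map_one])
  · omega

/-! ### The affine group of a field -/

/-- The map `t ↦ lin * t + tr` on the field `K`, an element of the affine group. -/
@[ext] structure Affine (K : Type) [Field K] where
  lin : Kˣ
  tr : K

namespace Affine

variable {K : Type} [Field K]

/-- Composition of affine maps. -/
instance : Mul (Affine K) := ⟨fun g h => ⟨g.lin * h.lin, g.tr + g.lin * h.tr⟩⟩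
instance : One (Affine K) := ⟨⟨1, 0⟩⟩
instance : Inv (Affine K) := ⟨fun g => ⟨g.lin⁻¹, -((g.lin⁻¹ : Kˣ) * g.tr)⟩⟩

@[simp] lemma mul_lin (g h : Affine K) : (g * h).lin = g.lin * h.lin := rfl
@[simp] lemma mul_tr (g h : Affine K) : (g * h).tr = g.tr + g.lin * h.tr := rfl
@[simp] lemma one_lin : (1 : Affine K).lin = 1 := rfl
@[simp] lemma one_tr : (1 : Affine K).tr = 0 := rfl
@[simp] lemma inv_lin (g : Affine K) : g⁻¹.lin = g.lin⁻¹ := rfl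
@[simp] lemma inv_tr (g : Affine K) : g⁻¹.tr = -((g.lin⁻¹ : Kˣ) * g.tr) := rfl

instance : Group (Affine K) :=
  Group.ofLeftAxioms
    (fun a b c => by ext <;> simp <;> ring)
    (fun a => by ext <;> simp)
    (fun a => by ext <;> simp)

instance [Finite K] : Finite (Affine K) :=
  Finite.of_injective (fun g : Affine K => (g.lin, g.tr)) fun g h e => by
    simp only [Prod.mk.injEq] at e
    exact Affine.ext e.1 e.2

/-- The translation by `c`. -/
def transl (c : K) : Affine K := ⟨1, c⟩

lemma transl_add (c d : K) : transl (c + d) = transl c * transl d := by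
  ext <;> simp [transl]

lemma transl_zero : transl (0 : K) = 1 := rfl

lemma mul_transl (g : Affine K) (c : K) : g * transl c = transl (g.lin * c) * g := by
  ext <;> simp [transl, add_comm]

end Affine

open Affine

/-! ### Expressing commutators by values of an identity -/

/-- The substitution of `g * h` for the letter `b` and of `g` for every other letter. -/
def subst {M : Type} [Monoid M] (b : ℕ) (g h : M) : F →* M :=
  FreeMonoid.lift fun i => if i = b then g * h else g

lemma map_subst {M M' : Type} [Monoid M] [Monoid M'] (φ : M →* M') (b : ℕ) (g h : M) (w : F) :
    φ (subst b g h w) = subst b (φ g) (φ h) w := by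
  have : φ.comp (subst b g h) = subst b (φ g) (φ h) := by
    apply FreeMonoid.hom_eq
    intro i
    by_cases hi : i = b <;> simp [subst, hi]
  exact DFunLike.congr_fun this w

/-- The value of `u v⁻¹` under `subst b g h`, where the `(N - 1)`-st power plays the role of the
inverse, as it does in a group of exponent dividing `N`. -/
def diffWord {M : Type} [Monoid M] (N : ℕ) (u v : F) (b : ℕ) (g h : M) : M :=
  subst b g h u * subst b g h v ^ (N - 1)

lemma map_diffWord {M M' : Type} [Monoid M] [Monoid M'] (φ : M →* M') (N : ℕ) (u v : F) (b : ℕ)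
    (g h : M) : φ (diffWord N u v b g h) = diffWord N u v b (φ g) (φ h) := by
  simp [diffWord, map_subst]

/-- The element `h * (D ^ k h)⁻¹`, where `D = diffWord N u v b g` and the inverse is again the
`(N - 1)`-st power. -/
def corrWord {M : Type} [Monoid M] (N k : ℕ) (u v : F) (b : ℕ) (g h : M) : M :=
  h * ((diffWord N u v b g)^[k] h) ^ (N - 1)

lemma map_corrWord {M M' : Type} [Monoid M] [Monoid M'] (φ : M →* M') (N k : ℕ) (u v : F) (b : ℕ)
    (g h : M) : φ (corrWord N k u v b g h) = corrWord N k u v b (φ g) (φ h) := by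
  have : φ ((diffWord N u v b g)^[k] h) = (diffWord N u v b (φ g))^[k] (φ h) :=
    Function.Semiconj.iterate_right (fun h => map_diffWord φ N u v b g h) k h
  simp [corrWord, this]

/-- The commutator `g h g⁻¹ h⁻¹`, with `(N - 1)`-st powers as inverses. -/
def commWord {M : Type} [Monoid M] (N : ℕ) (g h : M) : M := g * h * g ^ (N - 1) * h ^ (N - 1)

lemma map_commWord {M M' : Type} [Monoid M] [Monoid M'] (φ : M →* M') (N : ℕ) (g h : M) :
    φ (commWord N g h) = commWord N (φ g) (φ h) := by
  simp [commWord]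

section AffineValues

variable {K : Type} [Field K] [Algebra (ZMod 2) K]

lemma subst_transl (b : ℕ) (g : Affine K) (c : K) (w : F) :
    subst b g (transl c) w =
      transl (aeval (g.lin : K) (posPoly b (FreeMonoid.toList w)) * c) *
        g ^ (FreeMonoid.toList w).length := by
  induction w using FreeMonoid.inductionOn' with
  | one => simp [posPoly, transl_zero]
  | of_mul i w ih =>
    rw [map_mul, ih, FreeMonoid.toList_of_mul, List.length_cons, pow_succ', posPoly]
    by_cases hi : i = b
    · simp only [subst, FreeMonoid.lift_eval_of, hi, if_true, map_mul, map_add, map_one, aeval_X]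
      rw [mul_assoc, ← mul_assoc (transl c), ← transl_add, ← mul_assoc, mul_transl, mul_assoc]
      congr 2
      ring
    · simp only [subst, FreeMonoid.lift_eval_of, hi, if_false, map_mul, aeval_X, zero_add]
      rw [← mul_assoc, mul_transl, mul_assoc]
      congr 2
      ring

lemma diffWord_transl {N : ℕ} (hN : ∀ g : Affine K, g ^ (N - 1) = g⁻¹) (u v : F)
    (hl : (FreeMonoid.toList u).length = (FreeMonoid.toList v).length) (b : ℕ)
    (g : Affine K) (c : K) :
    diffWord N u v b g (transl c) = transl (aeval (g.lin : K)
      (posPoly b (FreeMonoid.toList u) - posPoly b (FreeMonoid.toList v)) * c) := by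
  rw [diffWord, hN, mul_inv_eq_iff_eq_mul, subst_transl, subst_transl, ← mul_assoc, ← transl_add,
    hl, map_sub]
  congr 2
  ring

lemma corrWord_transl {N : ℕ} (hN : ∀ g : Affine K, g ^ (N - 1) = g⁻¹) (k : ℕ) (u v : F)
    (hl : (FreeMonoid.toList u).length = (FreeMonoid.toList v).length) (b : ℕ)
    (g : Affine K) (c : K) :
    corrWord N k u v b g (transl c) = transl ((1 - aeval (g.lin : K)
      (posPoly b (FreeMonoid.toList u) - posPoly b (FreeMonoid.toList v)) ^ k) * c) := by
  have hiter : (diffWord N u v b g)^[k] (transl c) = transl (aeval (g.lin : K)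
      (posPoly b (FreeMonoid.toList u) - posPoly b (FreeMonoid.toList v)) ^ k * c) := by
    induction k with
    | zero => simp
    | succ k ih =>
      rw [Function.iterate_succ_apply', ih, diffWord_transl hN u v hl, pow_succ', mul_assoc]
  rw [corrWord, hN, hiter, mul_inv_eq_iff_eq_mul, ← transl_add]
  congr 1
  ring

/-- In the affine group, correcting the commutator of `g` and `h` first along `g` and then along
`h` gives `1`: if the linear part of `g` or of `h` is nontrivial, the corresponding step kills the
translation, and otherwise the commutator is already trivial. -/
lemma corrWord_affine {N : ℕ} (hN : ∀ g : Affine K, g ^ (N - 1) = g⁻¹) (k : ℕ) (u v : F)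
    (hl : (FreeMonoid.toList u).length = (FreeMonoid.toList v).length) (b : ℕ)
    (hk : ∀ a : K, a ≠ 0 → a ≠ 1 → aeval a
      (posPoly b (FreeMonoid.toList u) - posPoly b (FreeMonoid.toList v)) ^ k = 1)
    (g h : Affine K) :
    corrWord N k u v b h (corrWord N k u v b g (commWord N g h)) = 1 := by
  obtain ⟨c, hc⟩ : ∃ c, commWord N g h = transl c := by
    refine ⟨(commWord N g h).tr, Affine.ext ?_ rfl⟩
    simp only [commWord, hN, mul_lin, inv_lin, transl]
    rw [mul_inv_eq_one, mul_inv_eq_iff_eq_mul, mul_comm]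
  rw [hc, corrWord_transl hN k u v hl, corrWord_transl hN k u v hl, ← transl_zero]
  congr 1
  by_cases hg : g.lin = 1
  · by_cases hh : h.lin = 1
    · have : c = 0 := by
        have h1 := congrArg Affine.tr hc
        simp only [commWord, hN, mul_tr, mul_lin, inv_tr, inv_lin, transl, hg, hh] at h1
        rw [← h1]
        simp
      simp [this]
    · rw [hk h.lin h.lin.ne_zero (by simpa using hh)]
      simp
  · rw [hk g.lin g.lin.ne_zero (by simpa using hg)]
    simp

end AffineValues

/-! ### The group variety -/

/-- In a fully invariant congruence containing `u ≈ v` and `x ^ N ≈ 1`, corrections are trivial,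
because `diffWord` takes only trivial values. -/
lemma corrWord_rel (c : Con F) (hc : IsFullyInvariant c) (N : ℕ) (hN0 : 0 < N)
    (hN : ∀ w : F, c (w ^ N) 1) (k : ℕ) (hk : 0 < k) (u v : F) (huv : c u v) (b : ℕ) (g h : F) :
    c (corrWord N k u v b g h) h := by
  have hD : ∀ h', c (diffWord N u v b g h') 1 := by
    intro h'
    have h1 := c.mul (hc (subst b g h') u v huv) (c.refl (subst b g h' v ^ (N - 1)))
    rw [← pow_succ', Nat.sub_add_cancel hN0] at h1
    exact c.trans h1 (hN _)
  obtain ⟨k, rfl⟩ := Nat.exists_eq_succ_of_ne_zero hk.ne'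
  have h2 := c.mul (c.refl h) (c.pow (N - 1) (hD ((diffWord N u v b g)^[k] h)))
  rw [one_pow, mul_one] at h2
  rw [corrWord, Function.iterate_succ_apply']
  exact h2

lemma exists_group_variety (V : MON) (h : V ≠ ⊤) :
    ∃ Z : MON, ¬ theta Z (x * y) (y * x) ∧ theta (V ⊓ Z) (x * y) (y * x) := by
  obtain ⟨u, v, huv, hne, hl⟩ := exists_eq_length V h
  obtain ⟨b, hb⟩ : ∃ b, posPoly b (FreeMonoid.toList u) ≠ posPoly b (FreeMonoid.toList v) := by
    by_contra! hc
    exact hne (FreeMonoid.toList.injective (eq_of_posPoly_eq _ _ hl hc))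
  have hf := sub_ne_zero.2 hb
  obtain ⟨m, hmle, hm⟩ := Nat.exists_infinite_primes
    ((posPoly b (FreeMonoid.toList u) - posPoly b (FreeMonoid.toList v)).natDegree + 1)
  let K := GaloisField 2 m
  have hcard : Nat.card K = 2 ^ m := GaloisField.card 2 m hm.ne_zero
  have hcard4 : 2 < Nat.card K := by
    rw [hcard]
    calc 2 < 2 ^ 2 := by norm_num
      _ ≤ 2 ^ m := Nat.pow_le_pow_right (by norm_num) hm.two_le
  have hFin : Finite K := Nat.finite_of_card_ne_zero (by omega)
  have hFt : Fintype K := Fintype.ofFinite K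
  set N := Nat.card (Affine K) with hNdef
  have hN0 : 0 < N := Nat.card_pos
  have hpow : ∀ g : Affine K, g ^ N = 1 := fun g => pow_card_eq_one'
  have hinv : ∀ g : Affine K, g ^ (N - 1) = g⁻¹ := by
    intro g
    rw [eq_inv_iff_mul_eq_one, ← pow_succ, Nat.sub_add_cancel hN0, hpow]
  have hk : ∀ a : K, a ≠ 0 → a ≠ 1 → aeval a
      (posPoly b (FreeMonoid.toList u) - posPoly b (FreeMonoid.toList v)) ^ (Nat.card K - 1)
        = 1 := by
    intro a h0 h1
    rw [Nat.card_eq_fintype_card]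
    exact FiniteField.pow_card_sub_one_eq_one _ (aeval_ne_zero _ hf m hm (by omega) a h0 h1)
  refine ⟨varOf (Affine K), ?_, ?_⟩
  · intro hcomm
    classical
    obtain ⟨a, ha⟩ : ∃ a : K, a ∉ ({0, 1} : Finset K) := by
      by_contra! hall
      have h1 : (Finset.univ : Finset K).card ≤ ({0, 1} : Finset K).card :=
        Finset.card_le_card fun a _ => hall a
      rw [Finset.card_univ, ← Nat.card_eq_fintype_card] at h1
      have := h1.trans Finset.card_le_two
      omega
    simp only [Finset.mem_insert, Finset.mem_singleton, not_or] at ha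
    -- The dilation by `a` does not commute with the translation by `1`.
    have h1 := hcomm (FreeMonoid.lift fun i =>
      if i = 0 then (⟨Units.mk0 a ha.1, 0⟩ : Affine K) else transl 1)
    have h2 := congrArg Affine.tr h1
    simp [x, y, transl] at h2
    exact ha.2 h2
  · set c := theta (V ⊓ varOf (Affine K)) with hcdef
    have hcV : ∀ w w', theta V w w' → c w w' := (mon_le_iff _ _).1 inf_le_left
    have hcZ : ∀ w w', theta (varOf (Affine K)) w w' → c w w' := (mon_le_iff _ _).1 inf_le_right
    have hcN : ∀ w : F, c (w ^ N) 1 := fun w => hcZ _ _ fun φ => by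
      rw [map_pow, hpow, map_one]
    have hfi : IsFullyInvariant c := theta_isFullyInvariant _
    have hstep := corrWord_rel c hfi N hN0 hcN (Nat.card K - 1) (by omega) u v (hcV _ _ huv) b
    have htriv : c (commWord N x y) 1 := by
      refine c.trans (c.symm (c.trans (hstep y _) (hstep x _))) (hcZ _ _ fun φ => ?_)
      rw [map_corrWord, map_corrWord, map_commWord, map_one]
      exact corrWord_affine hinv _ u v hl b hk _ _
    -- Multiply the trivial commutator by `yx` on the right and cancel the inverses.
    have hxy : c (commWord N x y * (y * x)) (x * y) := hcZ _ _ fun φ => by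
      rw [map_mul, map_commWord, commWord, hinv, hinv]
      simp [mul_assoc]
    have h1 := c.mul htriv (c.refl (y * x))
    rw [one_mul] at h1
    exact c.trans (c.symm hxy) h1

theorem statement2 (V : MON) (hproper : V ≠ ⊤) (hum : IsUpperModularElt V) :
    theta V (x*y) (y*x) ∨ ∃ n : ℕ, 1 ≤ n ∧ theta V x (x^(n+1)) := by
  by_contra! hc
  obtain ⟨Z, hZ, hVZ⟩ := exists_group_variety V hproper
  exact not_upperModular V Z hc.1 (fun ⟨n, hn, h⟩ => hc.2 n hn h) hZ hVZ hum
end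

section
/- Every commutative element V of the lattice MON of monoid varieties (i.e., every V with (xy, yx) ∈ θ_V) is a codistributive element of MON: for all Y, Z ∈ MON, V ⊓ (Y ⊔ Z) = (V ⊓ Y) ⊔ (V ⊓ Z). -/
/-! ### Congruences on the additive monoid of natural numbers -/

lemma addCon_add_mul (A : AddCon ℕ) {n d : ℕ} (h : A n (n + d)) (k N : ℕ) (hN : n ≤ N) :
    A N (N + k * d) := by
  induction k with
  | zero => simpa using A.refl N
  | succ k ih =>
    have h1 := A.add h (A.refl (N - n + k * d))
    have e1 : n + (N - n + k * d) = N + k * d := by omega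
    have e2 : n + d + (N - n + k * d) = N + (k + 1) * d := by
      have : (k + 1) * d = k * d + d := by ring
      omega
    rw [e1, e2] at h1
    exact A.trans ih h1

/-- A congruence on `ℕ` is trivial or given by an index `n` and a period `m > 0`. -/
lemma addCon_classify (A : AddCon ℕ) : (∀ a b, A a b → a = b) ∨
    ∃ n m, 0 < m ∧ ∀ a b, A a b ↔ (a = b ∨ (n ≤ a ∧ n ≤ b ∧ a ≡ b [MOD m])) := by
  classical
  by_cases hA : ∀ a b, A a b → a = b
  · exact Or.inl hA
  right
  have hex : ∃ a d, 0 < d ∧ A a (a + d) := by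
    push Not at hA
    obtain ⟨a, b, hab, hne⟩ := hA
    rcases lt_or_gt_of_ne hne with h | h
    · exact ⟨a, b - a, by omega, by rwa [Nat.add_sub_cancel' h.le]⟩
    · exact ⟨b, a - b, by omega, by rw [Nat.add_sub_cancel' h.le]; exact A.symm hab⟩
  have hex' : ∃ d a, 0 < d ∧ A a (a + d) := by
    obtain ⟨a, d, h⟩ := hex
    exact ⟨d, a, h⟩
  obtain ⟨d, hd, hnd⟩ := Nat.find_spec hex
  obtain ⟨a₀, hm, ham⟩ := Nat.find_spec hex'
  have hnmin : ∀ a e, 0 < e → A a (a + e) → Nat.find hex ≤ a :=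
    fun a e he h => Nat.find_min' hex ⟨e, he, h⟩
  have hmmin : ∀ a e, 0 < e → A a (a + e) → Nat.find hex' ≤ e :=
    fun a e he h => Nat.find_min' hex' ⟨a, he, h⟩
  generalize Nat.find hex = n at *
  generalize Nat.find hex' = m at *
  -- the minimal index and the minimal period are attained simultaneously
  have hnm : A n (n + m) := by
    have h1 := addCon_add_mul A hnd a₀ n le_rfl
    have hge : a₀ ≤ n + a₀ * d := by nlinarith
    have h2 := addCon_add_mul A ham 1 _ hge
    have h3 := addCon_add_mul A hnd a₀ (n + m) (by omega)
    have e : n + a₀ * d + 1 * m = n + m + a₀ * d := by ring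
    rw [e] at h2
    exact A.trans h1 (A.trans h2 (A.symm h3))
  have key : ∀ a e, 0 < e → A a (a + e) → m ∣ e := by
    intro a e he h
    by_contra hdvd
    have hpos : 0 < e % m := Nat.pos_of_ne_zero fun h0 => hdvd (Nat.dvd_of_mod_eq_zero h0)
    have hna := hnmin a e he h
    have h2 := addCon_add_mul A hnm (e / m) (a + e % m) (by omega)
    have e2 : a + e % m + e / m * m = a + e := by
      have := Nat.mod_add_div' e m
      omega
    rw [e2] at h2
    exact absurd (hmmin a _ hpos (A.trans h (A.symm h2))) (Nat.not_le.mpr (Nat.mod_lt _ hm))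
  have fwd : ∀ a b, a < b → A a b → n ≤ a ∧ n ≤ b ∧ a ≡ b [MOD m] := by
    intro a b hlt h
    have h' : A a (a + (b - a)) := by rwa [Nat.add_sub_cancel' hlt.le]
    have h1 := hnmin a _ (by omega) h'
    exact ⟨h1, by omega, (Nat.modEq_iff_dvd' hlt.le).mpr (key a _ (by omega) h')⟩
  have bwd : ∀ a b, a ≤ b → n ≤ a → a ≡ b [MOD m] → A a b := by
    intro a b hle hna h
    obtain ⟨k, hk⟩ := (Nat.modEq_iff_dvd' hle).mp h
    have := addCon_add_mul A hnm k a hna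
    rwa [mul_comm, ← hk, Nat.add_sub_cancel' hle] at this
  refine ⟨n, m, hm, fun a b => ⟨fun h => ?_, ?_⟩⟩
  · rcases lt_trichotomy a b with hlt | heq | hlt
    · exact Or.inr (fwd a b hlt h)
    · exact Or.inl heq
    · obtain ⟨h1, h2, h3⟩ := fwd b a hlt (A.symm h)
      exact Or.inr ⟨h2, h1, h3.symm⟩
  · rintro (rfl | ⟨h1, h2, h3⟩)
    · exact A.refl a
    · rcases le_total a b with hle | hle
      · exact bwd a b hle h1 h3
      · exact A.symm (bwd b a hle h2 h3.symm)

/-- The congruence on `ℕ` of index `n` and period `m` (the equality relation if `m = 0`). -/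
def stdCon (n m : ℕ) : AddCon ℕ where
  r a b := a = b ∨ (n ≤ a ∧ n ≤ b ∧ a ≡ b [MOD m])
  iseqv := by
    refine ⟨fun a => Or.inl rfl, ?_, ?_⟩
    · rintro a b (rfl | ⟨h1, h2, h3⟩)
      · exact Or.inl rfl
      · exact Or.inr ⟨h2, h1, h3.symm⟩
    · rintro a b c (rfl | ⟨h1, h2, h3⟩) (rfl | ⟨k1, k2, k3⟩)
      · exact Or.inl rfl
      · exact Or.inr ⟨k1, k2, k3⟩
      · exact Or.inr ⟨h1, h2, h3⟩
      · exact Or.inr ⟨h1, k2, h3.trans k3⟩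
  add' := by
    rintro a b c d (rfl | ⟨h1, h2, h3⟩) (rfl | ⟨k1, k2, k3⟩)
    · exact Or.inl rfl
    · exact Or.inr ⟨by omega, by omega, Nat.ModEq.rfl.add k3⟩
    · exact Or.inr ⟨by omega, by omega, h3.add Nat.ModEq.rfl⟩
    · exact Or.inr ⟨by omega, by omega, h3.add k3⟩

lemma stdCon_mono {n m n' m' : ℕ} (hn : n' ≤ n) (hm : m' ∣ m) : stdCon n m ≤ stdCon n' m' := by
  rintro a b (h | ⟨h1, h2, h3⟩)
  · exact Or.inl h
  · exact Or.inr ⟨hn.trans h1, hn.trans h2, h3.of_dvd hm⟩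

lemma stdCon_gcd_le_of_le {n m n' m' : ℕ} (hm : 0 < m) (hm' : 0 < m') (E : AddCon ℕ)
    (h : stdCon n m ≤ E) (h' : stdCon n' m' ≤ E) {a b : ℕ} (ha : n ≤ a) (hb : n ≤ b)
    (hab : a ≡ b [MOD Nat.gcd m m']) : E a b := by
  -- replace `b` by an element exceeding the second index, with the same residue modulo `m`
  have hb' : b ≡ b + n' * m [MOD m] := by simp [Nat.ModEq]
  have hn' : n' ≤ b + n' * m := by nlinarith
  -- a common representative `k`, shifted upwards to exceed both indices
  obtain ⟨k, hk1, hk2⟩ := Nat.chineseRemainder' (hab.trans (hb'.of_dvd (Nat.gcd_dvd_left m m')))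
  have hpos : 0 < m * m' := Nat.mul_pos hm hm'
  have hK : n + n' ≤ k + (n + n') * (m * m') := by nlinarith
  have hK1 : k + (n + n') * (m * m') ≡ k [MOD m] :=
    (Nat.modEq_iff_dvd' (Nat.le_add_right _ _)).mpr
      (by rw [Nat.add_sub_cancel_left]; exact ⟨(n + n') * m', by ring⟩) |>.symm
  have hK2 : k + (n + n') * (m * m') ≡ k [MOD m'] :=
    (Nat.modEq_iff_dvd' (Nat.le_add_right _ _)).mpr
      (by rw [Nat.add_sub_cancel_left]; exact ⟨(n + n') * m, by ring⟩) |>.symm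
  have s1 : E a (k + (n + n') * (m * m')) :=
    h (Or.inr ⟨ha, by omega, (hK1.trans hk1).symm⟩)
  have s2 : E (k + (n + n') * (m * m')) (b + n' * m) :=
    h' (Or.inr ⟨by omega, hn', hK2.trans hk2⟩)
  have s3 : E b (b + n' * m) := h (Or.inr ⟨hb, by omega, hb'⟩)
  exact E.trans s1 (E.trans s2 (E.symm s3))

lemma stdCon_min_gcd_le {n m n' m' : ℕ} (hm : 0 < m) (hm' : 0 < m') :
    stdCon (min n n') (Nat.gcd m m') ≤ stdCon n m ⊔ stdCon n' m' := by
  rintro a b (rfl | ⟨h1, h2, h3⟩)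
  · exact AddCon.refl _ a
  · rcases le_total n n' with h | h
    · rw [min_eq_left h] at h1 h2
      exact stdCon_gcd_le_of_le hm hm' _ le_sup_left le_sup_right h1 h2 h3
    · rw [min_eq_right h] at h1 h2
      rw [Nat.gcd_comm] at h3
      exact stdCon_gcd_le_of_le hm' hm _ le_sup_right le_sup_left h1 h2 h3

lemma addCon_eq_bot_or_stdCon (A : AddCon ℕ) : A = ⊥ ∨ ∃ n m, 0 < m ∧ A = stdCon n m := by
  rcases addCon_classify A with h | ⟨n, m, hm, h⟩
  · exact Or.inl (le_bot_iff.mp fun a b hab => h a b hab)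
  · exact Or.inr ⟨n, m, hm, AddCon.ext fun a b => h a b⟩

lemma addCon_distrib (A B C : AddCon ℕ) : (A ⊔ B) ⊓ (A ⊔ C) ≤ A ⊔ (B ⊓ C) := by
  rcases addCon_eq_bot_or_stdCon A with rfl | ⟨n₁, m₁, h₁, rfl⟩
  · simp
  rcases addCon_eq_bot_or_stdCon B with rfl | ⟨n₂, m₂, h₂, rfl⟩
  · simp
  rcases addCon_eq_bot_or_stdCon C with rfl | ⟨n₃, m₃, h₃, rfl⟩
  · simp
  have hB : stdCon n₁ m₁ ⊔ stdCon n₂ m₂ ≤ stdCon (min n₁ n₂) (Nat.gcd m₁ m₂) :=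
    sup_le (stdCon_mono (min_le_left _ _) (Nat.gcd_dvd_left _ _))
      (stdCon_mono (min_le_right _ _) (Nat.gcd_dvd_right _ _))
  have hC : stdCon n₁ m₁ ⊔ stdCon n₃ m₃ ≤ stdCon (min n₁ n₃) (Nat.gcd m₁ m₃) :=
    sup_le (stdCon_mono (min_le_left _ _) (Nat.gcd_dvd_left _ _))
      (stdCon_mono (min_le_right _ _) (Nat.gcd_dvd_right _ _))
  have hBC : stdCon (max n₂ n₃) (Nat.lcm m₂ m₃) ≤ stdCon n₂ m₂ ⊓ stdCon n₃ m₃ :=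
    le_inf (stdCon_mono (le_max_left _ _) (Nat.dvd_lcm_left _ _))
      (stdCon_mono (le_max_right _ _) (Nat.dvd_lcm_right _ _))
  have hlcm : 0 < Nat.lcm m₂ m₃ := Nat.lcm_pos h₂ h₃
  refine le_trans ?_ ((stdCon_min_gcd_le h₁ hlcm).trans (sup_le_sup_left hBC _))
  refine (inf_le_inf hB hC).trans ?_
  rintro a b ⟨hab, hab'⟩
  rcases hab with h | ⟨p1, p2, p3⟩
  · exact Or.inl h
  rcases hab' with h | ⟨q1, q2, q3⟩
  · exact Or.inl h
  refine Or.inr ⟨by omega, by omega, ?_⟩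
  have hd : Nat.gcd m₁ (Nat.lcm m₂ m₃) = Nat.lcm (Nat.gcd m₁ m₂) (Nat.gcd m₁ m₃) := by
    have g₂ : 0 < Nat.gcd m₁ m₂ := Nat.gcd_pos_of_pos_left _ h₁
    have g₃ : 0 < Nat.gcd m₁ m₃ := Nat.gcd_pos_of_pos_left _ h₁
    refine Nat.factorization_inj (Nat.gcd_pos_of_pos_left _ h₁).ne' (Nat.lcm_pos g₂ g₃).ne' ?_
    rw [Nat.factorization_gcd h₁.ne' hlcm.ne', Nat.factorization_lcm h₂.ne' h₃.ne',
      Nat.factorization_lcm g₂.ne' g₃.ne', Nat.factorization_gcd h₁.ne' h₂.ne',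
      Nat.factorization_gcd h₁.ne' h₃.ne']
    ext p
    simp only [Finsupp.inf_apply, Finsupp.sup_apply]
    exact inf_sup_left (α := ℕ) _ _ _
  rw [hd]
  rw [Nat.modEq_iff_dvd] at p3 q3 ⊢
  rw [Int.natCast_dvd] at p3 q3 ⊢
  exact Nat.lcm_dvd p3 q3

/-! ### Occurrence numbers of letters in words -/

/-- The image of a word in a commutative monoid depends only on its occurrence numbers. -/
lemma hom_eq_prod_count {M : Type*} [CommMonoid M] (g : F →* M) (u : F) (S : Finset ℕ)
    (hS : ∀ i ∈ FreeMonoid.toList u, i ∈ S) :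
    g u = ∏ i ∈ S, g (FreeMonoid.of i) ^ (FreeMonoid.toList u).count i := by
  classical
  induction u using FreeMonoid.inductionOn' with
  | one => simp
  | of_mul a w ih =>
    have hS' : a ∈ S ∧ ∀ i ∈ FreeMonoid.toList w, i ∈ S := by simpa using hS
    rw [map_mul, ih hS'.2]
    simp only [FreeMonoid.toList_of_mul, List.count_cons, pow_add, Finset.prod_mul_distrib]
    rw [mul_comm]
    congr 1
    rw [Finset.prod_eq_single_of_mem a hS'.1]
    · simp
    · intro b _ hb
      simp [Ne.symm hb]

/-- The congruence relating words whose numbers of occurrences of every letter are `D`-related. -/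
def occCon (D : AddCon ℕ) : Con F where
  r u v := ∀ i, D ((FreeMonoid.toList u).count i) ((FreeMonoid.toList v).count i)
  iseqv := ⟨fun _ _ => D.refl _, fun h i => D.symm (h i), fun h k i => D.trans (h i) (k i)⟩
  mul' := by
    intro a b c d h k i
    simpa [FreeMonoid.toList_mul, List.count_append] using D.add (h i) (k i)

lemma occCon_mono {D E : AddCon ℕ} (h : D ≤ E) : occCon D ≤ occCon E :=
  fun _ _ huv i => h (huv i)

lemma occCon_fullyInvariant (D : AddCon ℕ) : IsFullyInvariant (occCon D) := by
  classical
  intro f u v h i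
  -- the number of occurrences of `i` in the image of a word, as a monoid homomorphism
  let g : F →* Multiplicative ℕ :=
    { toFun := fun w => Multiplicative.ofAdd ((FreeMonoid.toList (f w)).count i)
      map_one' := by simp
      map_mul' := fun a b => by simp [FreeMonoid.toList_mul, List.count_append] }
  let S := (FreeMonoid.toList u).toFinset ∪ (FreeMonoid.toList v).toFinset
  have hu := hom_eq_prod_count g u S (fun i hi => by simp [S, hi])
  have hv := hom_eq_prod_count g v S (fun i hi => by simp [S, hi])
  have hu' : (FreeMonoid.toList (f u)).count i = ∑ j ∈ S,
      (FreeMonoid.toList u).count j • (FreeMonoid.toList (f (FreeMonoid.of j))).count i := hu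
  have hv' : (FreeMonoid.toList (f v)).count i = ∑ j ∈ S,
      (FreeMonoid.toList v).count j • (FreeMonoid.toList (f (FreeMonoid.of j))).count i := hv
  rw [hu', hv']
  refine AddCon.finsetSum D S fun j _ => ?_
  rw [smul_eq_mul, smul_eq_mul, mul_comm, mul_comm (List.count j _)]
  exact D.nsmul _ (h j)

/-- The congruence on exponents given by the one-letter identities `x ^ a ≈ x ^ b` in `c`. -/
def expCon (c : Con F) : AddCon ℕ where
  r a b := c (x ^ a) (x ^ b)
  iseqv := ⟨fun _ => c.refl _, fun h => c.symm h, fun h k => c.trans h k⟩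
  add' := fun h k => by
    simpa only [pow_add] using c.mul h k

lemma expCon_mono {c d : Con F} (h : c ≤ d) : expCon c ≤ expCon d :=
  fun _ _ hab => h hab

lemma le_occCon_expCon {c : Con F} (hc : IsFullyInvariant c) : c ≤ occCon (expCon c) := by
  classical
  intro u v huv i
  let f : F →* F := FreeMonoid.lift fun j => if j = i then x else 1
  have hf : ∀ w : F, f w = x ^ (FreeMonoid.toList w).count i := by
    intro w
    induction w using FreeMonoid.inductionOn' with
    | one => simp
    | of_mul a w ih =>
      rw [map_mul, ih]
      by_cases h : a = i
      · simp [f, h, pow_succ']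
      · simp [f, h]
  have := hc f u v huv
  rwa [hf, hf] at this

lemma occCon_expCon_le {c : Con F} (hc : IsFullyInvariant c) (hxy : c (x * y) (y * x)) :
    occCon (expCon c) ≤ c := by
  classical
  have hcomm : ∀ u v : F, c (u * v) (v * u) := by
    intro u v
    have := hc (FreeMonoid.lift fun j => if j = 0 then u else v) _ _ hxy
    simpa [x, y] using this
  let _ : CommMonoid c.Quotient :=
    { (inferInstance : Monoid c.Quotient) with
      mul_comm := fun a b => by
        induction a using Con.induction_on with | _ a => ?_
        induction b using Con.induction_on with | _ b => ?_
        exact (Con.eq c).mpr (hcomm a b) }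
  intro u v huv
  let S := (FreeMonoid.toList u).toFinset ∪ (FreeMonoid.toList v).toFinset
  have hu := hom_eq_prod_count c.mk' u S (fun i hi => by simp [S, hi])
  have hv := hom_eq_prod_count c.mk' v S (fun i hi => by simp [S, hi])
  refine (Con.eq c).mp (show c.mk' u = c.mk' v from ?_)
  rw [hu, hv]
  refine Finset.prod_congr rfl fun i _ => ?_
  have h := hc (FreeMonoid.lift fun _ => FreeMonoid.of i) _ _ (huv i)
  have hx : (FreeMonoid.lift fun _ : ℕ => (FreeMonoid.of i : F)) x = FreeMonoid.of i := by
    simp [x]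
  rw [map_pow (FreeMonoid.lift _), map_pow (FreeMonoid.lift _), hx] at h
  exact (Con.eq c).mpr h

/-! ### Codistributivity -/

lemma ficon_distrib (α β γ : FICon) (hα : α.val (x * y) (y * x)) :
    (α ⊔ β) ⊓ (α ⊔ γ) ≤ α ⊔ (β ⊓ γ) := by
  have hsup : ∀ δ : FICon,
      (α ⊔ δ).val ≤ occCon (expCon α.val ⊔ expCon δ.val) := by
    intro δ
    let E : FICon := ⟨occCon (expCon α.val ⊔ expCon δ.val), occCon_fullyInvariant _⟩
    have h1 : α ≤ E := show α.val ≤ E.val from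
      (le_occCon_expCon α.2).trans (occCon_mono le_sup_left)
    have h2 : δ ≤ E := show δ.val ≤ E.val from
      (le_occCon_expCon δ.2).trans (occCon_mono le_sup_right)
    exact sup_le h1 h2
  have hαR : α.val ≤ (α ⊔ (β ⊓ γ)).val := (le_sup_left : α ≤ α ⊔ (β ⊓ γ))
  have hβγR : (β ⊓ γ).val ≤ (α ⊔ (β ⊓ γ)).val := (le_sup_right : β ⊓ γ ≤ α ⊔ (β ⊓ γ))
  have hinf : ∀ δ ε : FICon, (δ ⊓ ε).val = δ.val ⊓ ε.val := fun δ ε => fiGC.u_inf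
  have hexp : expCon α.val ⊔ (expCon β.val ⊓ expCon γ.val) ≤ expCon (α ⊔ (β ⊓ γ)).val := by
    refine sup_le (expCon_mono hαR) (le_trans ?_ (expCon_mono hβγR))
    rw [hinf]
    exact fun a b h => ⟨h.1, h.2⟩
  show ((α ⊔ β) ⊓ (α ⊔ γ)).val ≤ (α ⊔ (β ⊓ γ)).val
  refine le_trans ?_ (occCon_expCon_le (α ⊔ (β ⊓ γ)).2 (hαR hα))
  refine le_trans ?_ (occCon_mono ((addCon_distrib _ _ _).trans hexp))
  rw [hinf]
  intro u v h i
  exact ⟨hsup β h.1 i, hsup γ h.2 i⟩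

theorem statement3 (V : MON) (hcomm : theta V (x*y) (y*x)) :
    IsCodistributiveElt V := by
  intro Y Z
  refine le_antisymm ?_ le_inf_sup
  exact ficon_distrib (OrderDual.ofDual V) (OrderDual.ofDual Y) (OrderDual.ofDual Z) hcomm
end
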